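/- arXiv:2410.03485 — 2 statements merged into one kernel-verified Lean document; each statement's English description precedes it below -/
import Mathlib

section
/- Let K be a field of characteristic p with A-field structure ψ: F_q[T] → K, and let φ: F_q[T] → K{τ} be the Carlitz module, φ(T) = ψ(T) + τ. Then the image φ(F_q[T]) equals the centralizer of φ(T) in K{τ}, i.e., φ(F_q[T]) = {u ∈ K{τ} : u(ψ(T)+τ) = (ψ(T)+τ)u}. -/
/-- Multiplication in the twisted polynomial ring `K{τ}` (with `τ a = a^q τ`), where a
twisted polynomial `∑ aᵢ τ^i` is encoded by its coefficient function `ℕ →₀ K`. -/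
noncomputable def tmul {K : Type*} [Field K] (q : ℕ) (f g : ℕ →₀ K) : ℕ →₀ K :=
  f.sum fun i a => g.sum fun j b => Finsupp.single (i + j) (a * b ^ q ^ i)

/-- Powers in the twisted polynomial ring. -/
noncomputable def tpow {K : Type*} [Field K] (q : ℕ) (x : ℕ →₀ K) : ℕ → (ℕ →₀ K)
  | 0 => Finsupp.single 0 1
  | n + 1 => tmul q x (tpow q x n)

/-- The Carlitz module `φ : F_q[T] → K{τ}` determined by the `A`-field structure
`ψ` (with `e = ψ|_{F_q}` and `t = ψ(T)`): `φ(∑ aᵢ T^i) = ∑ ψ(aᵢ) (ψ(T) + τ)^i`. -/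
noncomputable def carlitz {Fq K : Type*} [Field Fq] [Field K] (q : ℕ) (e : Fq →+* K)
    (t : K) (f : Polynomial Fq) : ℕ →₀ K :=
  f.sum fun i a => e a • tpow q (Finsupp.single 0 t + Finsupp.single 1 1) i

/-! Comparing top coefficients in `u (t + τ) = (t + τ) u` shows that the leading coefficient of an
element `u` of the centralizer is fixed by the `q`-power Frobenius, hence lies in `F_q`. Since
`(t + τ) ^ N` is monic of degree `N` and is in the centralizer, subtracting an `F_q`-multiple of it
from `u` lowers the degree without leaving the centralizer. -/

lemma pow_pow_eq_self {M : Type*} [Monoid M] {q : ℕ} {c : M} (hc : c ^ q = c) (i : ℕ) :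
    c ^ q ^ i = c := by
  simpa only [pow_iterate] using Function.iterate_fixed (f := (· ^ q)) hc i

section TwistedPolynomial

open Finset.HasAntidiagonal (antidiagonal mem_antidiagonal)

variable {K : Type*} [Field K]

lemma tmul_apply {q : ℕ} (hq : q ≠ 0) (f g : ℕ →₀ K) (n : ℕ) :
    tmul q f g n = ∑ ij ∈ antidiagonal n, f ij.1 * g ij.2 ^ q ^ ij.1 := by
  classical
  have hsum : tmul q f g n = ∑ ij ∈ f.support ×ˢ g.support,
      if ij.1 + ij.2 = n then f ij.1 * g ij.2 ^ q ^ ij.1 else 0 := by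
    simp only [tmul, Finsupp.sum, Finsupp.finsetSum_apply, Finsupp.single_apply,
      Finset.sum_product]
  rw [hsum, ← Finset.sum_filter]
  refine Finset.sum_subset (fun ij h => ?_) fun ij hij hns => ?_
  · exact mem_antidiagonal.mpr (Finset.mem_filter.mp h).2
  · have hzero : f ij.1 ≠ 0 → g ij.2 = 0 := by
      simpa [mem_antidiagonal.mp hij] using hns
    rcases eq_or_ne (f ij.1) 0 with hf | hf
    · rw [hf, zero_mul]
    · rw [hzero hf, zero_pow (pow_ne_zero _ hq), mul_zero]

lemma tmul_single_single {q : ℕ} (hq : q ≠ 0) (i j : ℕ) (a b : K) :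
    tmul q (Finsupp.single i a) (Finsupp.single j b) =
      Finsupp.single (i + j) (a * b ^ q ^ i) := by
  rw [tmul, Finsupp.sum_single_index (by simp), Finsupp.sum_single_index]
  rw [zero_pow (pow_ne_zero i hq), mul_zero, Finsupp.single_zero]

lemma smul_tmul (q : ℕ) (c : K) (f g : ℕ →₀ K) : tmul q (c • f) g = c • tmul q f g := by
  rw [tmul, Finsupp.sum_smul_index (by simp)]
  simp only [tmul, Finsupp.smul_sum, Finsupp.smul_single, smul_eq_mul, mul_assoc]

lemma tmul_smul {q : ℕ} (hq : q ≠ 0) {c : K} (hc : c ^ q = c) (f g : ℕ →₀ K) :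
    tmul q f (c • g) = c • tmul q f g := by
  ext n
  simp only [tmul_apply hq, Finsupp.smul_apply, smul_eq_mul, Finset.mul_sum, mul_pow,
    pow_pow_eq_self hc, mul_left_comm]

lemma tmul_add_left (q : ℕ) (f g h : ℕ →₀ K) :
    tmul q (f + g) h = tmul q f h + tmul q g h :=
  Finsupp.sum_add_index' (by simp) (by simp [add_mul])

lemma tmul_one (q : ℕ) (f : ℕ →₀ K) : tmul q f (Finsupp.single 0 1) = f := by
  refine (Finsupp.sum_congr fun i _ => ?_).trans f.sum_single
  simp only [Finsupp.sum, Finsupp.support_single 0 (one_ne_zero' K), Finset.sum_singleton,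
    Finsupp.single_eq_same, one_pow, mul_one, add_zero]

lemma one_tmul (q : ℕ) (f : ℕ →₀ K) : tmul q (Finsupp.single 0 1) f = f := by
  rw [tmul, Finsupp.sum_single_index (by simp)]
  simp only [zero_add, pow_zero, pow_one, one_mul, Finsupp.sum_single]

section Degree

variable {q : ℕ} {f g : ℕ →₀ K} {a b : ℕ}

lemma tmul_apply_eq_zero_of_lt (hq : q ≠ 0) (hf : ∀ i, a < i → f i = 0)
    (hg : ∀ j, b < j → g j = 0) {n : ℕ} (hn : a + b < n) : tmul q f g n = 0 := by
  rw [tmul_apply hq]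
  refine Finset.sum_eq_zero fun ij hij => ?_
  have hij := mem_antidiagonal.mp hij
  rcases lt_or_ge a ij.1 with hi | hi
  · rw [hf _ hi, zero_mul]
  · rw [hg _ (by omega), zero_pow (pow_ne_zero _ hq), mul_zero]

lemma tmul_apply_add (hq : q ≠ 0) (hf : ∀ i, a < i → f i = 0)
    (hg : ∀ j, b < j → g j = 0) : tmul q f g (a + b) = f a * g b ^ q ^ a := by
  rw [tmul_apply hq]
  refine Finset.sum_eq_single_of_mem (a, b) (mem_antidiagonal.mpr rfl) ?_
  intro ij hij hne
  have hij := mem_antidiagonal.mp hij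
  rcases lt_trichotomy a ij.1 with hi | hi | hi
  · rw [hf _ hi, zero_mul]
  · exact absurd (Prod.ext hi.symm (by omega)) hne
  · rw [hg _ (by omega), zero_pow (pow_ne_zero _ hq), mul_zero]

/-- `f` is a monic twisted polynomial of degree `n` in `τ`. -/
structure IsTMonic (f : ℕ →₀ K) (n : ℕ) : Prop where
  apply_self : f n = 1
  apply_of_lt : ∀ k, n < k → f k = 0

lemma isTMonic_single (n : ℕ) : IsTMonic (Finsupp.single n (1 : K)) n where
  apply_self := Finsupp.single_eq_same
  apply_of_lt _ hk := Finsupp.single_eq_of_ne hk.ne'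

lemma IsTMonic.tmul (hq : q ≠ 0) (hf : IsTMonic f a) (hg : IsTMonic g b) :
    IsTMonic (tmul q f g) (a + b) where
  apply_self := by
    rw [tmul_apply_add hq hf.apply_of_lt hg.apply_of_lt, hf.apply_self, hg.apply_self,
      one_pow, mul_one]
  apply_of_lt _ := tmul_apply_eq_zero_of_lt hq hf.apply_of_lt hg.apply_of_lt

lemma IsTMonic.tpow (hq : q ≠ 0) (hf : IsTMonic f a) (n : ℕ) :
    IsTMonic (tpow q f n) (n * a) := by
  induction n with
  | zero =>
    rw [zero_mul]
    exact isTMonic_single 0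
  | succ n ih =>
    rw [Nat.succ_mul, add_comm (n * a)]
    exact hf.tmul hq ih

end Degree

section ExpChar

variable (p m : ℕ) [ExpChar K p]

lemma tmul_add_right (f g h : ℕ →₀ K) :
    tmul (p ^ m) f (g + h) = tmul (p ^ m) f g + tmul (p ^ m) f h := by
  ext n
  simp only [tmul_apply (expChar_pow_pos K p m).ne', Finsupp.add_apply, ← pow_mul,
    add_pow_expChar_pow, mul_add, Finset.sum_add_distrib]

/-- The multiplication of `K{τ}` as a biadditive map, for `τ` the `p ^ m`-power Frobenius. -/
noncomputable def tmulAddHom : (ℕ →₀ K) →+ (ℕ →₀ K) →+ (ℕ →₀ K) :=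
  AddMonoidHom.mk' (fun f => AddMonoidHom.mk' (tmul (p ^ m) f) (tmul_add_right p m f))
    fun f g => AddMonoidHom.ext (tmul_add_left (p ^ m) f g)

lemma tmul_assoc (f g h : ℕ →₀ K) :
    tmul (p ^ m) (tmul (p ^ m) f g) h = tmul (p ^ m) f (tmul (p ^ m) g h) := by
  have hq : p ^ m ≠ 0 := (expChar_pow_pos K p m).ne'
  induction f using Finsupp.induction_linear with
  | zero => simp only [tmul, Finsupp.sum_zero_index]
  | add f₁ f₂ h₁ h₂ => simp only [tmul_add_left, h₁, h₂]
  | single i a =>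
    induction g using Finsupp.induction_linear with
    | zero => simp [tmul]
    | add g₁ g₂ h₁ h₂ => simp only [tmul_add_left, tmul_add_right, h₁, h₂]
    | single j b =>
      induction h using Finsupp.induction_linear with
      | zero => simp [tmul]
      | add h₁ h₂ ih₁ ih₂ => simp only [tmul_add_right, ih₁, ih₂]
      | single k c =>
        simp only [tmul_single_single hq, add_assoc, mul_assoc, mul_pow, ← pow_mul, pow_add,
          mul_comm]

/-- The centralizer of `x` in `K{τ}`, as an additive subgroup, for `τ` the `p ^ m`-power
Frobenius. -/
noncomputable def tcentralizer (x : ℕ →₀ K) : AddSubgroup (ℕ →₀ K) :=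
  ((tmulAddHom p m).flip x).eqLocus (tmulAddHom p m x)

variable {p m} {x u : ℕ →₀ K}

lemma mem_tcentralizer :
    u ∈ tcentralizer p m x ↔ tmul (p ^ m) u x = tmul (p ^ m) x u :=
  Iff.rfl

lemma smul_mem_tcentralizer {c : K} (hc : c ^ p ^ m = c) (hu : u ∈ tcentralizer p m x) :
    c • u ∈ tcentralizer p m x := by
  rw [mem_tcentralizer, smul_tmul, tmul_smul (expChar_pow_pos K p m).ne' hc, mem_tcentralizer.mp hu]

lemma tpow_mem_tcentralizer (x : ℕ →₀ K) (n : ℕ) :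
    tpow (p ^ m) x n ∈ tcentralizer p m x := by
  rw [mem_tcentralizer]
  induction n with
  | zero => rw [tpow, one_tmul, tmul_one]
  | succ n ih => rw [tpow, tmul_assoc, ih]

lemma pow_pow_eq_self_of_mem_tcentralizer {d N : ℕ} (hx : IsTMonic x d)
    (hu : u ∈ tcentralizer p m x) (hN : ∀ k, N < k → u k = 0) :
    u N ^ (p ^ m) ^ d = u N := by
  have hq : p ^ m ≠ 0 := (expChar_pow_pos K p m).ne'
  calc u N ^ (p ^ m) ^ d = tmul (p ^ m) x u (d + N) := by
        rw [tmul_apply_add hq hx.apply_of_lt hN, hx.apply_self, one_mul]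
    _ = tmul (p ^ m) u x (N + d) := by rw [mem_tcentralizer.mp hu, add_comm]
    _ = u N := by rw [tmul_apply_add hq hN hx.apply_of_lt, hx.apply_self, one_pow, mul_one]

end ExpChar

end TwistedPolynomial

section Carlitz

variable {Fq K : Type*} [Field Fq] [Field K]

/-- The twisted polynomial `t + τ`, the value of the Carlitz module at `T`. -/
noncomputable abbrev carlitzGen (t : K) : ℕ →₀ K :=
  Finsupp.single 0 t + Finsupp.single 1 1

lemma isTMonic_carlitzGen (t : K) : IsTMonic (carlitzGen t) 1 where
  apply_self := by simp
  apply_of_lt k hk := by simp [show k ≠ 0 by omega, show k ≠ 1 by omega]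

lemma isTMonic_tpow_carlitzGen {q : ℕ} (hq : q ≠ 0) (t : K) (n : ℕ) :
    IsTMonic (tpow q (carlitzGen t) n) n := by
  simpa only [mul_one] using (isTMonic_carlitzGen t).tpow hq n

lemma carlitz_zero (q : ℕ) (e : Fq →+* K) (t : K) : carlitz q e t 0 = 0 :=
  Polynomial.sum_zero_index _

lemma carlitz_add_monomial (q : ℕ) (e : Fq →+* K) (t : K) (f : Polynomial Fq) (n : ℕ) (a : Fq) :
    carlitz q e t (f + Polynomial.monomial n a) =
      carlitz q e t f + e a • tpow q (carlitzGen t) n := by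
  rw [carlitz, Polynomial.sum_add_index f _ _ (by simp) (by simp [add_smul]),
    Polynomial.sum_monomial_index _ _ (by simp), carlitz]

variable [Fintype Fq]

lemma pow_card_eq_self_iff_mem_range {R : Type*} [CommRing R] [IsDomain R] (e : Fq →+* R) {c : R} :
    c ^ Fintype.card Fq = c ↔ c ∈ e.range := by
  refine ⟨fun hc => ?_, ?_⟩
  · have hsplits : (Polynomial.X ^ Fintype.card Fq - Polynomial.X : Polynomial Fq).Splits := by
      rw [Polynomial.splits_iff_card_roots, FiniteField.roots_X_pow_card_sub_X,
        FiniteField.X_pow_card_sub_X_natDegree_eq Fq Fintype.one_lt_card, Finset.card_val,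
        Finset.card_univ]
    refine hsplits.mem_range_of_isRoot
      (FiniteField.X_pow_card_sub_X_ne_zero Fq Fintype.one_lt_card) ?_
    simp [hc]
  · rintro ⟨a, rfl⟩
    rw [← map_pow, FiniteField.pow_card]

variable {p m : ℕ} [ExpChar K p] (e : Fq →+* K) (t : K)

lemma smul_tpow_mem_tcentralizer (hcard : Fintype.card Fq = p ^ m) (a : Fq) (x : ℕ →₀ K) (n : ℕ) :
    e a • tpow (p ^ m) x n ∈ tcentralizer p m x :=
  smul_mem_tcentralizer (hcard ▸ (pow_card_eq_self_iff_mem_range e).mpr ⟨a, rfl⟩)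
    (tpow_mem_tcentralizer x n)

lemma carlitz_mem_tcentralizer (hcard : Fintype.card Fq = p ^ m) (f : Polynomial Fq) :
    carlitz (p ^ m) e t f ∈ tcentralizer p m (carlitzGen t) :=
  sum_mem fun i _ => smul_tpow_mem_tcentralizer e hcard _ _ i

lemma exists_carlitz_eq_of_mem_tcentralizer (hcard : Fintype.card Fq = p ^ m) (N : ℕ)
    {u : ℕ →₀ K} (hu : u ∈ tcentralizer p m (carlitzGen t)) (hN : ∀ k, N ≤ k → u k = 0) :
    ∃ f, carlitz (p ^ m) e t f = u := by
  induction N generalizing u with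
  | zero => exact ⟨0, (carlitz_zero _ e t).trans (Finsupp.ext fun k => (hN k k.zero_le).symm)⟩
  | succ N ih =>
    obtain ⟨a, ha⟩ : u N ∈ e.range := by
      rw [← pow_card_eq_self_iff_mem_range]
      simpa only [hcard, pow_one] using
        pow_pow_eq_self_of_mem_tcentralizer (isTMonic_carlitzGen t) hu hN
    have hpow := isTMonic_tpow_carlitzGen (expChar_pow_pos K p m).ne' t N
    have hmem : u - e a • tpow (p ^ m) (carlitzGen t) N ∈ tcentralizer p m (carlitzGen t) :=
      sub_mem hu (smul_tpow_mem_tcentralizer e hcard a _ N)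
    have hdeg : ∀ k, N ≤ k → (u - e a • tpow (p ^ m) (carlitzGen t) N) k = 0 := by
      intro k hk
      rw [Finsupp.sub_apply, Finsupp.smul_apply, smul_eq_mul]
      rcases hk.eq_or_lt with rfl | hk
      · rw [hpow.apply_self, mul_one, ha, sub_self]
      · rw [hpow.apply_of_lt k hk, mul_zero, sub_zero, hN k hk]
    obtain ⟨f, hf⟩ := ih hmem hdeg
    exact ⟨f + Polynomial.monomial N a, by rw [carlitz_add_monomial, hf, sub_add_cancel]⟩

lemma range_carlitz (hcard : Fintype.card Fq = p ^ m) :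
    Set.range (carlitz (p ^ m) e t) = tcentralizer p m (carlitzGen t) := by
  refine Set.Subset.antisymm ?_ fun u hu => ?_
  · rintro _ ⟨f, rfl⟩
    exact carlitz_mem_tcentralizer e t hcard f
  · obtain ⟨N, hN⟩ := u.support.exists_nat_subset_range
    refine exists_carlitz_eq_of_mem_tcentralizer e t hcard N hu fun k hk => ?_
    exact Finsupp.notMem_support_iff.mp fun hk' => (Finset.mem_range.mp (hN hk')).not_ge hk

end Carlitz

/-- The image of the Carlitz module is the centralizer of `φ(T) = ψ(T) + τ` in `K{τ}`. -/
theorem stmt2 {Fq K : Type*} [Field Fq] [Fintype Fq] [Field K]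
    (p m q : ℕ) (hp : p.Prime) [CharP K p] (hq : q = p ^ m) (hm : 1 ≤ m)
    (hcard : Fintype.card Fq = q) (e : Fq →+* K) (t : K) :
    Set.range (carlitz q e t) =
      {u : ℕ →₀ K | tmul q u (Finsupp.single 0 t + Finsupp.single 1 1)
        = tmul q (Finsupp.single 0 t + Finsupp.single 1 1) u} := by
  subst hq
  have : ExpChar K p := .prime hp
  exact range_carlitz e t hcard
end

section
/- Let R be an integral domain with a language L extending the language of rings by constants and relations only, and suppose Hilbert's tenth problem over (R, L) has a positive answer (is decidable). Let α be integral over R with minimal polynomial having coefficients in R, lying in the fraction field's algebraic closure. Then Hilbert's tenth problem over R[α], in the language L augmented by a constant for α and a unary predicate for membership in R, also has a positive answer. -/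
/-- Terms in the language of rings augmented by constants from `γ`, with variables
from `Fin m`. -/
inductive RTerm (γ : Type) : ℕ → Type
  | var {m : ℕ} : Fin m → RTerm γ m
  | const {m : ℕ} : γ → RTerm γ m
  | zero {m : ℕ} : RTerm γ m
  | one {m : ℕ} : RTerm γ m
  | add {m : ℕ} : RTerm γ m → RTerm γ m → RTerm γ m
  | mul {m : ℕ} : RTerm γ m → RTerm γ m → RTerm γ m
  | neg {m : ℕ} : RTerm γ m → RTerm γ m

/-- Evaluation of a term in a ring `T`, given interpretations of the constants and an
assignment of the variables. -/
def RTerm.eval {γ : Type} {T : Type*} [Ring T] (cI : γ → T) {m : ℕ}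
    (v : Fin m → T) : RTerm γ m → T
  | .var i => v i
  | .const g => cI g
  | .zero => 0
  | .one => 1
  | .add s t => RTerm.eval cI v s + RTerm.eval cI v t
  | .mul s t => RTerm.eval cI v s * RTerm.eval cI v t
  | .neg s => - RTerm.eval cI v s

/-- A Diophantine system in the language of rings with constants `γ` and extra relation
symbols `rels`: finitely many equations between terms and finitely many atomic relation
conditions, in variables `Fin nvars` (all existentially quantified). -/
structure DSystem (γ : Type) (rels : ℕ → Type) where
  nvars : ℕ
  eqs : List (RTerm γ nvars × RTerm γ nvars)
  atoms : List (Σ n : ℕ, rels n × (Fin n → RTerm γ nvars))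

/-- Solvability of a Diophantine system in a ring `T` with given interpretations of the
constants and relations. -/
def DSystem.Solvable {γ : Type} {rels : ℕ → Type} {T : Type*} [Ring T] (cI : γ → T)
    (relI : ∀ n, rels n → (Fin n → T) → Prop) (S : DSystem γ rels) : Prop :=
  ∃ v : Fin S.nvars → T,
    (∀ e ∈ S.eqs, RTerm.eval cI v e.1 = RTerm.eval cI v e.2) ∧
    (∀ a ∈ S.atoms, relI a.1 a.2.1 fun i => RTerm.eval cI v (a.2.2 i))

/-- A Gödel numbering of terms. -/
def RTerm.enc {γ : Type} [Encodable γ] {m : ℕ} : RTerm γ m → ℕ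
  | .var i => Nat.pair 0 i
  | .const g => Nat.pair 1 (Encodable.encode g)
  | .zero => Nat.pair 2 0
  | .one => Nat.pair 3 0
  | .add s t => Nat.pair 4 (Nat.pair s.enc t.enc)
  | .mul s t => Nat.pair 5 (Nat.pair s.enc t.enc)
  | .neg s => Nat.pair 6 s.enc

/-- A Gödel numbering of Diophantine systems. -/
def DSystem.enc {γ : Type} {rels : ℕ → Type} [Encodable γ] [∀ n, Encodable (rels n)]
    (S : DSystem γ rels) : ℕ :=
  Nat.pair S.nvars (Nat.pair
    (Encodable.encode (S.eqs.map fun e => (e.1.enc, e.2.enc)))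
    (Encodable.encode (S.atoms.map fun a =>
      (a.1, Encodable.encode a.2.1, List.ofFn fun i => (a.2.2 i).enc))))

/-- Hilbert's tenth problem over `(T, L)` has a positive answer: there is a computable
procedure deciding solvability of Diophantine systems (via their Gödel numbers). -/
def HTPPos {γ : Type} {rels : ℕ → Type} [Encodable γ] [∀ n, Encodable (rels n)]
    (T : Type*) [Ring T] (cI : γ → T) (relI : ∀ n, rels n → (Fin n → T) → Prop) : Prop :=
  ∃ dec : ℕ → Bool, Computable dec ∧
    ∀ S : DSystem γ rels, (S.Solvable cI relI ↔ dec S.enc = true)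

/-- The relation symbols for `R[α]`: the old ones together with one new unary symbol
(membership in `R`). -/
def relsA (rels : ℕ → Type) : ℕ → Type
  | 0 => rels 0
  | 1 => Sum (rels 1) Unit
  | (n + 2) => rels (n + 2)

instance relsAEncodable {rels : ℕ → Type} [∀ n, Encodable (rels n)] (n : ℕ) :
    Encodable (relsA rels n) :=
  match n with
  | 0 => inferInstanceAs (Encodable (rels 0))
  | 1 => inferInstanceAs (Encodable (Sum (rels 1) Unit))
  | (n + 2) => inferInstanceAs (Encodable (rels (n + 2)))

/-- The interpretation of the relation symbols over `R[α] = Subring.closure (R ∪ {α})`: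
an old relation holds of a tuple iff all its entries lie in `R` and the original relation
holds, and the new unary symbol is interpreted as membership in `R`. -/
def relIA {A : Type*} [CommRing A] {rels : ℕ → Type} (R : Subring A) (α : A)
    (relI : ∀ n, rels n → (Fin n → R) → Prop) :
    ∀ n, relsA rels n → (Fin n → ↥(Subring.closure ((R : Set A) ∪ {α}))) → Prop :=
  fun n =>
    match n with
    | 0 => fun ρ v => ∃ w : Fin 0 → R, (∀ i, ((w i : A)) = ((v i : A))) ∧ relI 0 ρ w
    | 1 => fun ρ v =>
        match ρ with
        | Sum.inl ρ => ∃ w : Fin 1 → R, (∀ i, ((w i : A)) = ((v i : A))) ∧ relI 1 ρ w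
        | Sum.inr _ => ((v 0 : A)) ∈ R
    | (n + 2) => fun ρ v =>
        ∃ w : Fin (n + 2) → R, (∀ i, ((w i : A)) = ((v i : A))) ∧ relI (n + 2) ρ w

/-- The interpretation of the constants over `R[α]`: the old constants together with a new
constant denoting `α`. -/
def cIA {A : Type*} [CommRing A] {γ : Type} (R : Subring A) (α : A) (cI : γ → R) :
    γ ⊕ Unit → ↥(Subring.closure ((R : Set A) ∪ {α})) :=
  Sum.elim
    (fun g => ⟨(cI g : A), Subring.subset_closure (Set.mem_union_left _ (cI g).2)⟩)
    (fun _ => ⟨α, Subring.subset_closure (Set.mem_union_right _ rfl)⟩)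

/-!
An unknown of `R[α]` is written as `∑ y j * α ^ j` with `y j` in `R` and `j < d = deg P`. The powers
of `α` may be linearly dependent, so the resulting conditions on the `y j` cannot be read off
coordinate by coordinate. Instead, let `β : Fin d → Ω` list the roots of `P` in an algebraic closure
and consider conditions over `R` in which these roots occur as parameters; the given system is such
a condition, with `α` as one of the roots. Permuting the roots, one can ask at which orderings
`β ∘ σ` such a condition holds.

That a condition holds at *some* ordering is Diophantine over `R`: terms `t j` vanish simultaneously
at some ordering if and only if `∏ σ, ∑ j, t j (β ∘ σ) * X ^ j = 0`, and the coefficients of this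
product are symmetric in the roots. To keep this effective for systems of any size, the terms are
replaced by their coordinates in the module-finite algebra generated by the functions
`σ ↦ β (σ i)`, and the symmetric product is formed once and for all for tuples of length `d!`: a
list of terms has a common zero among the `d!` orderings as soon as each `d!`-tuple of its members
has one.

To get from *some* ordering to the ordering `β` itself, note that the sets of orderings at which
conditions hold are closed under intersections and translations. If `φ` is a condition for which
this set is minimal among those containing the identity, then a condition `ψ` holds at `β` if and
only if `φ ∧ ψ` holds at some ordering.
-/

section SymmetricElimination

open MvPolynomial

variable {R₀ Ω ι κ : Type*} [CommRing R₀] [CommRing Ω] [Algebra R₀ Ω] [Fintype ι]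
  {p : Polynomial R₀} {β : ι → Ω}

theorem aeval_roots_esymm_mem_range
    (hp : p.map (algebraMap R₀ Ω) = ∏ i, (Polynomial.X - Polynomial.C (β i))) {k : ℕ}
    (hk : k ≤ Fintype.card ι) :
    aeval β (esymm ι R₀ k) ∈ (algebraMap R₀ Ω).range := by
  have hcard : (Finset.univ.val.map β).card = Fintype.card ι := by simp
  have hvieta : algebraMap R₀ Ω (p.coeff (Fintype.card ι - k)) =
      (-1) ^ k * aeval β (esymm ι R₀ k) := by
    have hprod : ∏ i, (Polynomial.X - Polynomial.C (β i)) =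
        ((Finset.univ.val.map β).map fun x => Polynomial.X - Polynomial.C x).prod := by
      rw [Multiset.map_map]; rfl
    rw [← Polynomial.coeff_map, hp, hprod,
      Multiset.prod_X_sub_C_coeff _ (hcard ▸ Nat.sub_le _ _), aeval_esymm_eq_multiset_esymm,
      hcard, Nat.sub_sub_self hk]
  refine ⟨(-1) ^ k * p.coeff (Fintype.card ι - k), ?_⟩
  rw [map_mul, hvieta, map_pow, map_neg, map_one, ← mul_assoc, ← mul_pow, neg_one_mul, neg_neg,
    one_pow, one_mul]

theorem aeval_roots_mem_range_of_isSymmetric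
    (hp : p.map (algebraMap R₀ Ω) = ∏ i, (Polynomial.X - Polynomial.C (β i)))
    {s : MvPolynomial ι R₀} (hs : s.IsSymmetric) :
    aeval β s ∈ (algebraMap R₀ Ω).range := by
  obtain ⟨q, hq⟩ := esymmAlgHom_surjective R₀ (σ := ι) le_rfl ⟨s, hs⟩
  have hqs : aeval (fun i : Fin (Fintype.card ι) => esymm ι R₀ (i + 1)) q = s := by
    rw [← esymmAlgHom_apply, hq]
  choose a ha using fun i : Fin (Fintype.card ι) =>
    aeval_roots_esymm_mem_range hp (Nat.succ_le_of_lt i.2)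
  refine ⟨aeval a q, ?_⟩
  rw [← hqs, ← AlgHom.comp_apply, comp_aeval, ← aeval_algebraMap_apply]
  exact congrArg (aeval · q) (funext ha)

theorem exists_map_algebraMap_eq_of_rename_invariant
    (hp : p.map (algebraMap R₀ Ω) = ∏ i, (Polynomial.X - Polynomial.C (β i)))
    {q : MvPolynomial κ (MvPolynomial ι R₀)}
    (hq : ∀ τ : Equiv.Perm ι, map ↑(rename τ : _ →ₐ[R₀] MvPolynomial ι R₀) q = q) :
    ∃ f : MvPolynomial κ R₀, map (algebraMap R₀ Ω) f = map ↑(aeval β : _ →ₐ[R₀] Ω) q := by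
  change _ ∈ Set.range (map (algebraMap R₀ Ω))
  rw [mem_range_map_iff_coeffs_subset]
  intro z hz
  obtain ⟨b, -, rfl⟩ := mem_coeffs_iff.1 hz
  rw [coeff_map]
  refine aeval_roots_mem_range_of_isSymmetric hp (s := q.coeff b) fun τ => ?_
  conv_rhs => rw [← hq τ, coeff_map]
  rfl

theorem forall_fin_coeff_eq_zero_iff_map_eq_zero {S T : Type*} [Semiring S] [Semiring T]
    (f : S →+* T) (h : Polynomial S) :
    (∀ k : Fin (h.natDegree + 1), f (h.coeff k) = 0) ↔ h.map f = 0 := by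
  simp only [Polynomial.ext_iff, Polynomial.coeff_map, Polynomial.coeff_zero]
  refine ⟨fun H k => ?_, fun H k => H k⟩
  obtain hk | hk := lt_or_ge k (h.natDegree + 1)
  · exact H ⟨k, hk⟩
  · rw [Polynomial.coeff_eq_zero_of_natDegree_lt hk, map_zero]

theorem prod_sum_monomial_eq_zero_iff {S : Type*} [CommRing S] [IsDomain S] {M : ℕ}
    (a : κ → Fin M → S) (s : Finset κ) :
    ∏ σ ∈ s, ∑ j : Fin M, Polynomial.monomial (j : ℕ) (a σ j) = 0 ↔ ∃ σ ∈ s, ∀ j, a σ j = 0 := by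
  rw [Finset.prod_eq_zero_iff]
  refine exists_congr fun σ => and_congr_right fun _ => ⟨fun H j => ?_, fun H => by simp [H]⟩
  simpa [Polynomial.finsetSum_coeff, Polynomial.coeff_monomial, Fin.val_inj] using
    congrArg (Polynomial.coeff · j) H

/- The vanishing of all `t j` at an ordering `β ∘ σ` is the vanishing of `∑ j, t j X ^ j` there.
The product of these polynomials over all orderings has symmetric coefficients. -/
theorem exists_elimination_polynomials [IsDomain Ω]
    (hp : p.map (algebraMap R₀ Ω) = ∏ i, (Polynomial.X - Polynomial.C (β i))) {M : ℕ}
    (t : Fin M → MvPolynomial κ (MvPolynomial ι R₀)) :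
    ∃ (n : ℕ) (F : Fin n → MvPolynomial κ R₀), ∀ y : κ → Ω,
      (∀ k, aeval y (F k) = 0) ↔
        ∃ σ : Equiv.Perm ι, ∀ j, eval₂ ↑(aeval (β ∘ σ) : _ →ₐ[R₀] Ω) y (t j) = 0 := by
  classical
  let act (σ : Equiv.Perm ι) :
      MvPolynomial κ (MvPolynomial ι R₀) →+* MvPolynomial κ (MvPolynomial ι R₀) :=
    map ↑(rename σ : _ →ₐ[R₀] MvPolynomial ι R₀)
  have hact (τ σ q) : act τ (act σ q) = act (τ * σ) q := by
    simp only [act, map_map]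
    congr 2
    ext <;> simp
  let h := ∏ σ, ∑ j : Fin M, Polynomial.monomial (j : ℕ) (act σ (t j))
  have hinvariant (τ) : h.map (act τ) = h := by
    simp only [h, Polynomial.map_prod, Polynomial.map_sum, Polynomial.map_monomial, hact]
    exact Fintype.prod_equiv (Equiv.mulLeft τ) _ _ fun σ => rfl
  choose F hF using fun k => exists_map_algebraMap_eq_of_rename_invariant hp (q := h.coeff k)
    fun τ => (Polynomial.coeff_map (act τ) k).symm.trans
      (congrArg (Polynomial.coeff · k) (hinvariant τ))
  refine ⟨h.natDegree + 1, fun k => F k, fun y => ?_⟩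
  let value : MvPolynomial κ (MvPolynomial ι R₀) →+* Ω := eval₂Hom ↑(aeval β : _ →ₐ[R₀] Ω) y
  have hFvalue (k) : aeval y (F k) = value (h.coeff k) := by
    rw [aeval_def, ← eval_map, hF, eval_map, coe_eval₂Hom]
  have hvalue (σ q) : value (act σ q) = eval₂ ↑(aeval (β ∘ σ) : _ →ₐ[R₀] Ω) y q := by
    simp only [value, act, coe_eval₂Hom, eval₂_map]
    congr 1
    ext <;> simp
  simp only [hFvalue, forall_fin_coeff_eq_zero_iff_map_eq_zero, h, Polynomial.map_prod,
    Polynomial.map_sum, Polynomial.map_monomial, hvalue, prod_sum_monomial_eq_zero_iff,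
    Finset.mem_univ, true_and]

end SymmetricElimination

theorem exists_one_mem_iff_inter_nonempty {G : Type*} [Group G] [Finite G] (𝓕 : Set (Set G))
    (huniv : Set.univ ∈ 𝓕) (hinter : ∀ s ∈ 𝓕, ∀ t ∈ 𝓕, s ∩ t ∈ 𝓕)
    (htrans : ∀ s ∈ 𝓕, ∀ g : G, {x | x * g ∈ s} ∈ 𝓕) :
    ∃ s ∈ 𝓕, ∀ t ∈ 𝓕, 1 ∈ t ↔ (s ∩ t).Nonempty := by
  -- For `g` in a minimal `s` containing `1`, minimality gives `s ⊆ s * g⁻¹`, and this is an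
  -- equality because both sides have the same size.
  obtain ⟨s, ⟨hs, hs1⟩, hmin⟩ := (Set.toFinite {s | s ∈ 𝓕 ∧ (1 : G) ∈ s}).exists_minimal
    ⟨Set.univ, huniv, Set.mem_univ _⟩
  have hle : ∀ t ∈ 𝓕, (1 : G) ∈ t → s ⊆ t := fun t ht h1 =>
    (hmin ⟨hinter s hs t ht, hs1, h1⟩ Set.inter_subset_left).trans Set.inter_subset_right
  refine ⟨s, hs, fun t ht => ⟨fun h1 => ⟨1, hs1, h1⟩, ?_⟩⟩
  rintro ⟨g, hgs, hgt⟩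
  have hsub : s ⊆ {x | x * g ∈ s} := hle _ (htrans s hs g) (by simpa using hgs)
  have himage : (fun x => x * g) '' s = s :=
    Set.eq_of_subset_of_ncard_le (by rintro _ ⟨x, hx, rfl⟩; exact hsub hx)
      (Set.ncard_image_of_injective s (mul_left_injective g)).ge (Set.toFinite s)
  obtain ⟨x, hx, hxg⟩ := himage.ge hs1
  have := hle _ (htrans t ht g) (by simpa using hgt) hx
  simpa [hxg] using this

namespace RTerm

variable {γ γ' : Type} {m m' n : ℕ} {T T' : Type*}

/-- Simultaneous substitution of terms for the constants and the variables of a term. -/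
def bind (f : γ → RTerm γ' m') (g : Fin m → RTerm γ' m') : RTerm γ m → RTerm γ' m'
  | .var i => g i
  | .const c => f c
  | .zero => .zero
  | .one => .one
  | .add s t => .add (bind f g s) (bind f g t)
  | .mul s t => .mul (bind f g s) (bind f g t)
  | .neg s => .neg (bind f g s)

theorem eval_bind [Ring T] (cI : γ' → T) (v : Fin m' → T) (f : γ → RTerm γ' m')
    (g : Fin m → RTerm γ' m') (t : RTerm γ m) :
    (t.bind f g).eval cI v = t.eval (fun c => (f c).eval cI v) fun i => (g i).eval cI v := by
  induction t <;> simp only [bind, eval, *]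

theorem map_eval [Ring T] [Ring T'] (f : T →+* T') (cI : γ → T) (v : Fin m → T) (t : RTerm γ m) :
    f (t.eval cI v) = t.eval (f ∘ cI) (f ∘ v) := by
  induction t <;> simp only [eval, Function.comp_apply, map_zero, map_one, map_add, map_mul,
    map_neg, *]

/-- Substitution of terms for the variables of a term. -/
abbrev subst (g : Fin m → RTerm γ m') (t : RTerm γ m) : RTerm γ m' :=
  t.bind .const g

/-- Renaming of the variables of a term. -/
abbrev rename (f : Fin m → Fin m') (t : RTerm γ m) : RTerm γ m' :=
  t.subst fun i => .var (f i)

theorem eval_subst [Ring T] (cI : γ → T) (v : Fin m' → T) (g : Fin m → RTerm γ m')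
    (t : RTerm γ m) : (t.subst g).eval cI v = t.eval cI fun i => (g i).eval cI v :=
  eval_bind cI v .const g t

/-- The difference of two terms. -/
def sub (s t : RTerm γ m) : RTerm γ m :=
  .add s (.neg t)

theorem eval_sub [Ring T] (cI : γ → T) (v : Fin m → T) (s t : RTerm γ m) :
    (s.sub t).eval cI v = s.eval cI v - t.eval cI v :=
  (sub_eq_add_neg _ _).symm

/-- The polynomial with coefficients `y` evaluated at `x`, by Horner's rule. -/
def horner (x : RTerm γ m) : ∀ {n : ℕ}, (Fin n → RTerm γ m) → RTerm γ m
  | 0, _ => .zero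
  | _ + 1, y => .add (y 0) (.mul x (horner x fun j => y j.succ))

theorem eval_horner [CommRing T] (cI : γ → T) (v : Fin m → T) (x : RTerm γ m)
    (y : Fin n → RTerm γ m) :
    (horner x y).eval cI v = ∑ j, (y j).eval cI v * x.eval cI v ^ (j : ℕ) := by
  induction n with
  | zero => simp [horner, eval]
  | succ n ih =>
    simp only [horner, eval, ih, Fin.sum_univ_succ, Finset.mul_sum, Fin.val_zero, Fin.val_succ,
      pow_zero, mul_one, pow_succ']
    exact congrArg _ (Finset.sum_congr rfl fun _ _ => mul_left_comm ..)

theorem exists_eval_eq_of_mem_closure [Ring T] (cI : γ → T) {a : T}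
    (ha : a ∈ Subring.closure (Set.range cI)) :
    ∃ t : RTerm γ m, ∀ v, t.eval cI v = a := by
  induction ha using Subring.closure_induction with
  | mem a ha =>
    obtain ⟨g, rfl⟩ := ha
    exact ⟨.const g, fun _ => rfl⟩
  | zero => exact ⟨.zero, fun _ => rfl⟩
  | one => exact ⟨.one, fun _ => rfl⟩
  | add a b _ _ hs ht =>
    obtain ⟨⟨s, hs⟩, t, ht⟩ := hs, ht
    exact ⟨.add s t, fun v => congrArg₂ _ (hs v) (ht v)⟩
  | neg a _ hs =>
    obtain ⟨s, hs⟩ := hs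
    exact ⟨.neg s, fun v => congrArg _ (hs v)⟩
  | mul a b _ _ hs ht =>
    obtain ⟨⟨s, hs⟩, t, ht⟩ := hs, ht
    exact ⟨.mul s t, fun v => congrArg₂ _ (hs v) (ht v)⟩

theorem exists_eval_eq_aeval [CommRing T] (cI : γ → T)
    (q : MvPolynomial (Fin m) (Subring.closure (Set.range cI))) :
    ∃ t : RTerm γ m, ∀ v, t.eval cI v = MvPolynomial.aeval v q := by
  induction q using MvPolynomial.induction_on with
  | C a =>
    obtain ⟨t, ht⟩ := exists_eval_eq_of_mem_closure (m := m) cI a.2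
    exact ⟨t, fun v => (ht v).trans (MvPolynomial.aeval_C v a).symm⟩
  | add p q hs ht =>
    obtain ⟨⟨s, hs⟩, t, ht⟩ := hs, ht
    exact ⟨.add s t, fun v => by rw [eval, hs, ht, map_add]⟩
  | mul_X p i hs =>
    obtain ⟨s, hs⟩ := hs
    exact ⟨.mul s (.var i), fun v => by rw [eval, eval, hs, map_mul, MvPolynomial.aeval_X]⟩

theorem enc_injective [Encodable γ] : Function.Injective (enc : RTerm γ m → ℕ) := by
  intro s t h
  induction s generalizing t <;> cases t <;> simp only [enc, Nat.pair_eq_pair] at h <;>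
    grind [Encodable.encode_inj]

end RTerm

/-- Terms computing with elements `∑ i, a i • e i` of an algebra in which `d` elements (the
*roots*) are distinguished: the coordinates of a scalar, of the roots, and of a product in terms of
the coordinates of the two factors. -/
structure CoordinateTerms (γ : Type) (d N : ℕ) where
  scalar : Fin N → RTerm γ 1
  root : Fin d → Fin N → RTerm γ 0
  mul : Fin N → RTerm γ (N + N)

namespace CoordinateTerms

variable {γ : Type} {d N m : ℕ}

/-- The coordinates of the value of a term that may mention the roots. -/
def coords (C : CoordinateTerms γ d N) : RTerm (γ ⊕ Fin d) m → Fin N → RTerm γ m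
  | .var k => fun i => (C.scalar i).subst fun _ => .var k
  | .const (.inl g) => fun i => (C.scalar i).subst fun _ => .const g
  | .const (.inr j) => fun i => (C.root j i).subst Fin.elim0
  | .zero => fun _ => .zero
  | .one => fun i => (C.scalar i).subst fun _ => .one
  | .add s t => fun i => .add (C.coords s i) (C.coords t i)
  | .mul s t => fun i => (C.mul i).subst (Fin.append (C.coords s) (C.coords t))
  | .neg s => fun i => .neg (C.coords s i)

variable {R B : Type*} [CommRing R] [CommRing B] [Algebra R B]

/-- The terms `C` compute coordinates with respect to `e` when the roots are `x`. -/
structure Represents (C : CoordinateTerms γ d N) (cI : γ → R) (x : Fin d → B) (e : Fin N → B) :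
    Prop where
  scalar (a : R) :
    Fintype.linearCombination R e (fun i => (C.scalar i).eval cI fun _ => a) = algebraMap R B a
  root (j : Fin d) : Fintype.linearCombination R e (fun i => (C.root j i).eval cI Fin.elim0) = x j
  mul (a b : Fin N → R) :
    Fintype.linearCombination R e (fun i => (C.mul i).eval cI (Fin.append a b)) =
      Fintype.linearCombination R e a * Fintype.linearCombination R e b

theorem Represents.linearCombination_coords {C : CoordinateTerms γ d N} {cI : γ → R}
    {x : Fin d → B} {e : Fin N → B} (hC : C.Represents cI x e) (v : Fin m → R)
    (t : RTerm (γ ⊕ Fin d) m) :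
    Fintype.linearCombination R e (fun i => (C.coords t i).eval cI v) =
      t.eval (Sum.elim (algebraMap R B ∘ cI) x) (algebraMap R B ∘ v) := by
  induction t with
  | var k => simpa only [coords, RTerm.eval_subst] using! hC.scalar (v k)
  | const g =>
    rcases g with g | j
    · simpa only [coords, RTerm.eval_subst] using! hC.scalar (cI g)
    · simp only [coords, RTerm.eval_subst, RTerm.eval, Sum.elim_inr, ← hC.root j]
      congr! 3
  | zero => exact map_zero _
  | one => simpa only [coords, RTerm.eval_subst, RTerm.eval, map_one] using hC.scalar 1
  | add s t hs ht => simp only [RTerm.eval, ← hs, ← ht, ← map_add]; rfl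
  | mul s t hs ht =>
    have happend : (fun i => (Fin.append (C.coords s) (C.coords t) i).eval cI v) =
        Fin.append (fun i => (C.coords s i).eval cI v) fun i => (C.coords t i).eval cI v := by
      funext i
      refine i.addCases (fun i => ?_) fun i => ?_ <;> simp only [Fin.append_left, Fin.append_right]
    simp only [coords, RTerm.eval_subst, RTerm.eval, happend, hC.mul, hs, ht]
  | neg s hs => simp only [RTerm.eval, ← hs, ← map_neg]; rfl

theorem exists_represents_of_span_eq_adjoin (cI : γ → R) (x : Fin d → B) (e : Fin N → B)
    (he : Submodule.span (Subring.closure (Set.range cI)) (Set.range e) =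
      Subalgebra.toSubmodule (Algebra.adjoin (Subring.closure (Set.range cI)) (Set.range x))) :
    ∃ C : CoordinateTerms γ d N, C.Represents cI x e := by
  have hmem (i) : e i ∈ Algebra.adjoin (Subring.closure (Set.range cI)) (Set.range x) :=
    he.le (Submodule.subset_span ⟨i, rfl⟩)
  have hcoords {b} (hb : b ∈ Algebra.adjoin (Subring.closure (Set.range cI)) (Set.range x)) :
      ∃ c : Fin N → Subring.closure (Set.range cI), ∑ i, c i • e i = b :=
    (Submodule.mem_span_range_iff_exists_fun _).1 (he.ge hb)
  obtain ⟨one, hone⟩ := hcoords (one_mem _)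
  choose root hroot using fun j => hcoords (Algebra.subset_adjoin ⟨j, rfl⟩)
  choose prod hprod using fun j k => hcoords (mul_mem (hmem j) (hmem k))
  choose scalarTerm hscalar using fun i =>
    RTerm.exists_eval_eq_aeval cI (MvPolynomial.X (0 : Fin 1) * MvPolynomial.C (one i))
  choose rootTerm hrootTerm using fun j i =>
    RTerm.exists_eval_eq_aeval cI (MvPolynomial.C (σ := Fin 0) (root j i))
  choose mulTerm hmul using fun i => RTerm.exists_eval_eq_aeval cI
    (∑ j, ∑ k, MvPolynomial.X (Fin.castAdd N j) * MvPolynomial.X (Fin.natAdd N k) *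
      MvPolynomial.C (prod j k i))
  refine ⟨⟨scalarTerm, rootTerm, mulTerm⟩, fun a => ?_, fun j => ?_, fun a b => ?_⟩
  · simp only [Fintype.linearCombination_apply, hscalar, map_mul, MvPolynomial.aeval_X,
      MvPolynomial.aeval_C, mul_smul, ← Finset.smul_sum, algebraMap_smul, hone]
    exact (Algebra.algebraMap_eq_smul_one a).symm
  · simp only [Fintype.linearCombination_apply, hrootTerm, MvPolynomial.aeval_C, algebraMap_smul,
      hroot]
  · simp only [Fintype.linearCombination_apply, hmul, map_sum, map_mul, MvPolynomial.aeval_X,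
      MvPolynomial.aeval_C, Fin.append_left, Fin.append_right, Finset.sum_smul, Finset.sum_mul_sum,
      smul_mul_smul_comm, ← hprod, Finset.smul_sum, mul_smul, algebraMap_smul]
    rw [Finset.sum_comm]
    exact Finset.sum_congr rfl fun _ _ => Finset.sum_comm

theorem exists_represents (cI : γ → R) {x : Fin d → B}
    (hx : ∀ i, IsIntegral (Subring.closure (Set.range cI)) (x i)) :
    ∃ (N : ℕ) (e : Fin N → B) (C : CoordinateTerms γ d N), C.Represents cI x e ∧
      ∀ i, e i ∈ Algebra.adjoin (Subring.closure (Set.range cI)) (Set.range x) := by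
  obtain ⟨N, e, he⟩ := Submodule.fg_iff_exists_fin_generating_family.1
    (fg_adjoin_of_finite (Set.finite_range x) (Set.forall_mem_range.2 hx))
  obtain ⟨C, hC⟩ := exists_represents_of_span_eq_adjoin cI x e he
  exact ⟨N, e, C, hC, fun i => he.le (Submodule.subset_span ⟨i, rfl⟩)⟩

end CoordinateTerms

/-- A finite list of conditions on variables ranging over `R` and on an ordering of the roots of a
polynomial over `R`: terms in the variables and the roots that are to vanish, and atomic relations
between the variables. The constant `Sum.inr i` denotes the `i`-th root. -/
structure RootSystem (γ : Type) (rels : ℕ → Type) (d : ℕ) where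
  nvars : ℕ
  conds : List (RTerm (γ ⊕ Fin d) nvars)
  atoms : List (Σ n : ℕ, rels n × (Fin n → Fin nvars))

namespace RootSystem

variable {γ : Type} {rels : ℕ → Type} {d : ℕ}

/-- The system without conditions. -/
def empty : RootSystem γ rels d :=
  ⟨0, [], []⟩

/-- The conjunction of two systems, with disjoint sets of variables. -/
def conj (φ ψ : RootSystem γ rels d) : RootSystem γ rels d where
  nvars := φ.nvars + ψ.nvars
  conds := φ.conds.map (RTerm.rename (Fin.castAdd _)) ++ ψ.conds.map (RTerm.rename (Fin.natAdd _))
  atoms := (φ.atoms.map fun a => ⟨a.1, a.2.1, Fin.castAdd _ ∘ a.2.2⟩) ++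
    ψ.atoms.map fun a => ⟨a.1, a.2.1, Fin.natAdd _ ∘ a.2.2⟩

/-- The same conditions with the roots renamed. -/
def permute (τ : Equiv.Perm (Fin d)) (φ : RootSystem γ rels d) : RootSystem γ rels d where
  nvars := φ.nvars
  conds := φ.conds.map (RTerm.bind (fun c => .const (c.map id τ)) .var)
  atoms := φ.atoms

variable {R Ω : Type*} [CommRing R] [CommRing Ω] [Algebra R Ω] (cI : γ → R)
  (relI : ∀ n, rels n → (Fin n → R) → Prop)

/-- All conditions are satisfied by the variables `v` and the roots `x`. -/
def IsSolution (φ : RootSystem γ rels d) (x : Fin d → Ω) (v : Fin φ.nvars → R) : Prop :=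
  (∀ t ∈ φ.conds, t.eval (Sum.elim (algebraMap R Ω ∘ cI) x) (algebraMap R Ω ∘ v) = 0) ∧
    ∀ a ∈ φ.atoms, relI a.1 a.2.1 (v ∘ a.2.2)

/-- The conditions are satisfiable when the roots are `x`. -/
def HoldsAt (φ : RootSystem γ rels d) (x : Fin d → Ω) : Prop :=
  ∃ v : Fin φ.nvars → R, φ.IsSolution cI relI x v

variable (x : Fin d → Ω)

variable {cI relI}

theorem isSolution_mk {n : ℕ} {conds : List (RTerm (γ ⊕ Fin d) n)}
    {atoms : List (Σ n' : ℕ, rels n' × (Fin n' → Fin n))} {v : Fin n → R} :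
    IsSolution cI relI ⟨n, conds, atoms⟩ x v ↔
      (∀ t ∈ conds, t.eval (Sum.elim (algebraMap R Ω ∘ cI) x) (algebraMap R Ω ∘ v) = 0) ∧
        ∀ a ∈ atoms, relI a.1 a.2.1 (v ∘ a.2.2) :=
  Iff.rfl

theorem holdsAt_empty : (empty : RootSystem γ rels d).HoldsAt cI relI x :=
  ⟨Fin.elim0, List.forall_mem_nil _, List.forall_mem_nil _⟩

theorem isSolution_conj {φ ψ : RootSystem γ rels d} {v : Fin (φ.nvars + ψ.nvars) → R} :
    (φ.conj ψ).IsSolution cI relI x v ↔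
      φ.IsSolution cI relI x (v ∘ Fin.castAdd _) ∧ ψ.IsSolution cI relI x (v ∘ Fin.natAdd _) := by
  simp only [conj, isSolution_mk, List.forall_mem_append, List.forall_mem_map, RTerm.eval_subst]
  exact and_and_and_comm

theorem holdsAt_conj (φ ψ : RootSystem γ rels d) :
    (φ.conj ψ).HoldsAt cI relI x ↔ φ.HoldsAt cI relI x ∧ ψ.HoldsAt cI relI x := by
  constructor
  · rintro ⟨v, hv⟩
    exact ((isSolution_conj x).1 hv).imp (⟨_, ·⟩) (⟨_, ·⟩)
  · rintro ⟨⟨v, hv⟩, w, hw⟩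
    refine ⟨Fin.append v w, (isSolution_conj x).2 ⟨?_, ?_⟩⟩
    · simpa only [Function.comp_def, Fin.append_left] using hv
    · simpa only [Function.comp_def, Fin.append_right] using hw

theorem holdsAt_permute (τ : Equiv.Perm (Fin d)) (φ : RootSystem γ rels d) :
    (φ.permute τ).HoldsAt cI relI x ↔ φ.HoldsAt cI relI (x ∘ τ) := by
  have hconst : Sum.elim (algebraMap R Ω ∘ cI) (x ∘ τ) =
      fun c : γ ⊕ Fin d => Sum.elim (algebraMap R Ω ∘ cI) x (c.map id τ) := by
    funext c
    cases c <;> rfl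
  refine exists_congr fun v : Fin φ.nvars → R => (isSolution_mk x).trans (and_congr_left' ?_)
  simp only [List.forall_mem_map, RTerm.eval_bind, hconst]
  rfl

end RootSystem

section Tuples

variable {α ι : Type*}

/-- The vectors of length `n` with entries in `l`. -/
def tuples (l : List α) : ∀ n, List (List.Vector α n)
  | 0 => [.nil]
  | n + 1 => l.flatMap fun a => (tuples l n).map (a ::ᵥ ·)

theorem mem_tuples {l : List α} {n : ℕ} {v : List.Vector α n} :
    v ∈ tuples l n ↔ ∀ j, v.get j ∈ l := by
  induction n with
  | zero => simp [tuples, Subsingleton.elim v .nil]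
  | succ n ih =>
    simp only [tuples, List.mem_flatMap, List.mem_map, Fin.forall_fin_succ]
    constructor
    · rintro ⟨a, ha, w, hw, rfl⟩
      exact ⟨by simpa, by simpa [← ih]⟩
    · rintro ⟨h0, hs⟩
      exact ⟨v.head, by simpa using h0, v.tail, ih.2 (by simpa using hs), v.cons_head_tail⟩

theorem forall_mem_tuples_iff [Fintype ι] {l : List α} {P : ι → α → Prop} :
    (∀ v ∈ tuples l (Fintype.card ι), ∃ i, ∀ j, P i (v.get j)) ↔ ∃ i, ∀ a ∈ l, P i a := by
  refine ⟨fun H => ?_, fun ⟨i, hi⟩ v hv => ⟨i, fun j => hi _ (mem_tuples.1 hv j)⟩⟩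
  by_contra! hfail
  choose bad hbad hP using hfail
  obtain ⟨i, hi⟩ := H (.ofFn (bad ∘ (Fintype.equivFin ι).symm))
    (mem_tuples.2 fun j => by simp [hbad])
  exact hP i (by simpa using hi (Fintype.equivFin ι i))

end Tuples

theorem aeval_pi_apply {R S ι κ : Type*} [CommSemiring R] [CommSemiring S] [Algebra R S]
    (x : ι → κ → S) (q : MvPolynomial ι R) (k : κ) :
    MvPolynomial.aeval x q k = MvPolynomial.aeval (fun i => x i k) q :=
  MvPolynomial.comp_aeval_apply x (Pi.evalAlgHom R (fun _ => S) k) q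

section Orderings

variable {R Ω : Type*} {d N : ℕ} [CommRing R] [CommRing Ω] [Algebra R Ω] {β : Fin d → Ω}

theorem isIntegral_root_orderings {p : Polynomial R} (hmonic : p.Monic)
    (hp : p.map (algebraMap R Ω) = ∏ i, (Polynomial.X - Polynomial.C (β i))) (i : Fin d) :
    IsIntegral R fun σ : Equiv.Perm (Fin d) => β (σ i) := by
  refine ⟨p, hmonic, funext fun σ => ?_⟩
  have hroot : p.eval₂ (algebraMap R Ω) (β (σ i)) = 0 := by
    rw [← Polynomial.eval_map, hp, Polynomial.eval_prod]
    exact Finset.prod_eq_zero (Finset.mem_univ (σ i)) (by simp)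
  exact (Polynomial.hom_eval₂ p _ (Pi.evalRingHom (fun _ => Ω) σ) _).trans hroot

theorem exists_elimination_polynomials_of_mem_adjoin [IsDomain Ω] [FaithfulSMul R Ω]
    {R₀ : Subring R} {p : Polynomial R₀}
    (hp : p.map (algebraMap R₀ Ω) = ∏ i, (Polynomial.X - Polynomial.C (β i))) {M : ℕ}
    {e : Fin N → Equiv.Perm (Fin d) → Ω}
    (he : ∀ i, e i ∈ Algebra.adjoin R₀ (Set.range fun i σ => β (σ i))) :
    ∃ (K : ℕ) (F : Fin K → MvPolynomial (Fin (M * N)) R₀), ∀ a : Fin M → Fin N → R,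
      (∀ k, MvPolynomial.aeval (fun q => a q.divNat q.modNat) (F k) = 0) ↔
        ∃ σ, ∀ j, Fintype.linearCombination R e (a j) σ = 0 := by
  simp only [Algebra.adjoin_range_eq_range_aeval, AlgHom.mem_range] at he
  choose ε hε using he
  have heσ (i) (σ : Equiv.Perm (Fin d)) : MvPolynomial.aeval (β ∘ σ) (ε i) = e i σ := by
    rw [← hε, aeval_pi_apply]
    rfl
  obtain ⟨K, F, hF⟩ := exists_elimination_polynomials hp fun j : Fin M =>
    ∑ i, MvPolynomial.X (finProdFinEquiv (j, i)) * MvPolynomial.C (ε i)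
  refine ⟨K, F, fun a => ?_⟩
  let y (q : Fin (M * N)) : R := a q.divNat q.modNat
  have hy (j i) : y (finProdFinEquiv (j, i)) = a j i := by
    obtain ⟨hj, hi⟩ := Prod.ext_iff.1 (finProdFinEquiv.symm_apply_apply (j, i))
    exact congrArg₂ a hj hi
  have hFy (k) : MvPolynomial.aeval y (F k) = 0 ↔
      MvPolynomial.aeval (algebraMap R Ω ∘ y) (F k) = 0 := by
    rw [← map_eq_zero_iff _ (FaithfulSMul.algebraMap_injective R Ω),
      ← MvPolynomial.aeval_algebraMap_apply]
  rw [forall_congr' hFy, hF]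
  refine exists_congr fun σ => forall_congr' fun j => ?_
  simp [Fintype.linearCombination_apply, MvPolynomial.eval₂_sum, heσ, hy, Algebra.smul_def]

end Orderings

namespace RootSystem

variable {γ : Type} {rels : ℕ → Type} {d N M K m : ℕ}

/-- The system over `R` expressing that the terms `F` vanish at the coordinates of every `M`-tuple
of conditions. -/
def eliminate (C : CoordinateTerms γ d N) (F : Fin K → RTerm γ (M * N))
    (φ : RootSystem γ rels d) : DSystem γ rels where
  nvars := φ.nvars
  eqs := (tuples (φ.conds.map C.coords) M).flatMap fun w =>
    List.ofFn fun k => ((F k).subst fun q => w.get q.divNat q.modNat, .zero)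
  atoms := φ.atoms.map fun a => ⟨a.1, a.2.1, fun i => .var (a.2.2 i)⟩

variable {R Ω : Type*} [CommRing R] [CommRing Ω] [Algebra R Ω] {cI : γ → R}
  {relI : ∀ n, rels n → (Fin n → R) → Prop}

theorem eliminate_solvable_iff {β : Fin d → Ω} {e : Fin N → Equiv.Perm (Fin d) → Ω}
    {C : CoordinateTerms γ d N} (hC : C.Represents cI (fun i σ => β (σ i)) e)
    {F : Fin K → RTerm γ (Fintype.card (Equiv.Perm (Fin d)) * N)}
    (hF : ∀ a : Fin _ → Fin N → R, (∀ k, (F k).eval cI (fun q => a q.divNat q.modNat) = 0) ↔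
      ∃ σ, ∀ j, Fintype.linearCombination R e (a j) σ = 0)
    (φ : RootSystem γ rels d) :
    (φ.eliminate C F).Solvable cI relI ↔ ∃ σ : Equiv.Perm (Fin d), φ.HoldsAt cI relI (β ∘ σ) := by
  have hvalue (σ : Equiv.Perm (Fin d)) (v : Fin φ.nvars → R) (t : RTerm (γ ⊕ Fin d) φ.nvars) :
      Fintype.linearCombination R e (fun i => (C.coords t i).eval cI v) σ =
        t.eval (Sum.elim (algebraMap R Ω ∘ cI) (β ∘ σ)) (algebraMap R Ω ∘ v) := by
    rw [hC.linearCombination_coords]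
    refine (RTerm.map_eval (Pi.evalRingHom (fun _ => Ω) σ) _ _ t).trans ?_
    congr 1
    funext c
    cases c <;> rfl
  simp only [HoldsAt, IsSolution, ← hvalue, exists_comm (α := Equiv.Perm _), exists_and_right]
  refine exists_congr fun v : Fin φ.nvars → R => and_congr ?_ List.forall_mem_map
  have htuples := forall_mem_tuples_iff (l := φ.conds.map C.coords)
    (P := fun (σ : Equiv.Perm (Fin d)) a =>
      Fintype.linearCombination R e (fun i => (a i).eval cI v) σ = 0)
  simp only [List.forall_mem_map] at htuples
  rw [← htuples]
  refine List.forall_mem_flatMap.trans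
    (forall₂_congr fun w _ => List.forall_mem_ofFn_iff.trans ?_)
  exact Iff.trans (forall_congr' fun k => (RTerm.eval_subst cI v _ (F k)).congr_left)
    (hF fun j i => (w.get j i).eval cI v)

theorem exists_eliminate_solvable_iff [IsDomain Ω] [FaithfulSMul R Ω] (cI : γ → R) {β : Fin d → Ω}
    {p : Polynomial (Subring.closure (Set.range cI))} (hmonic : p.Monic)
    (hp : p.map (algebraMap (Subring.closure (Set.range cI)) Ω) =
      ∏ i, (Polynomial.X - Polynomial.C (β i))) :
    ∃ (N K : ℕ) (C : CoordinateTerms γ d N)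
      (F : Fin K → RTerm γ (Fintype.card (Equiv.Perm (Fin d)) * N)),
      ∀ {rels : ℕ → Type} (relI : ∀ n, rels n → (Fin n → R) → Prop) (φ : RootSystem γ rels d),
        (φ.eliminate C F).Solvable cI relI ↔
          ∃ σ : Equiv.Perm (Fin d), φ.HoldsAt cI relI (β ∘ σ) := by
  obtain ⟨N, e, C, hC, he⟩ := CoordinateTerms.exists_represents cI
    (isIntegral_root_orderings hmonic hp)
  obtain ⟨K, F₀, hF₀⟩ := exists_elimination_polynomials_of_mem_adjoin hp he
  choose F hF using fun k => RTerm.exists_eval_eq_aeval cI (F₀ k)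
  exact ⟨N, K, C, F, fun relI φ => eliminate_solvable_iff hC (by simpa only [hF] using hF₀) φ⟩

end RootSystem

namespace RTerm

variable {γ : Type} {d m : ℕ}

/-- The value of a term over `R[α]` at the `i₀`-th root, when each of its variables stands for
`∑ j, y j * α ^ j`. Behind the coefficients `y` there are `W + 1` further variables. -/
def atRoot (W : ℕ) (i₀ : Fin d) (t : RTerm (γ ⊕ Unit) m) :
    RTerm (γ ⊕ Fin d) (m * d + (W + 1)) :=
  t.bind (fun c => .const (c.map id fun _ => i₀)) fun k =>
    (horner (.const (.inr i₀)) .var).subst fun j => .var (.castAdd _ (finProdFinEquiv (k, j)))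

/-- The variable standing for the value of a term that occurs as the argument of a relation. The
variables are indexed by Gödel numbers, so that `W` has to bound those of all the terms in use. -/
def argVar [Encodable γ] (d W : ℕ) (t : RTerm (γ ⊕ Unit) m) : Fin (m * d + (W + 1)) :=
  .natAdd _ (.ofNat _ t.enc)

end RTerm

/-- The relation symbol of the original language underlying a relation symbol over `R[α]`. -/
def oldSymbol {rels : ℕ → Type} : ∀ {n : ℕ}, relsA rels n → Option (rels n)
  | 0 => some
  | 1 => Sum.elim some fun _ => none
  | _ + 2 => some

/-- The conditions on coefficient vectors equivalent to a system over `R[α]`, the `i₀`-th root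
taking the part of `α`. -/
def DSystem.toRootSystem {γ : Type} {rels : ℕ → Type} [Encodable γ] [∀ n, Encodable (rels n)]
    {d : ℕ} (i₀ : Fin d) (S : DSystem (γ ⊕ Unit) (relsA rels)) : RootSystem γ rels d where
  nvars := S.nvars * d + (S.enc + 1)
  conds := (S.eqs.map fun e => (e.1.atRoot S.enc i₀).sub (e.2.atRoot S.enc i₀)) ++
    S.atoms.flatMap fun a => List.ofFn fun i =>
      ((a.2.2 i).atRoot S.enc i₀).sub (.var ((a.2.2 i).argVar d S.enc))
  atoms := S.atoms.filterMap fun a =>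
    (oldSymbol a.2.1).map fun ρ => ⟨a.1, ρ, fun i => (a.2.2 i).argVar d S.enc⟩

theorem encode_le_encode_of_mem {α : Type*} [Encodable α] {a : α} {l : List α} (h : a ∈ l) :
    Encodable.encode a ≤ Encodable.encode l := by
  induction l with
  | nil => simp at h
  | cons b l ih =>
    rw [Encodable.encode_list_cons]
    rcases List.mem_cons.1 h with rfl | h
    · exact (Nat.left_le_pair _ _).trans (Nat.le_succ _)
    · exact (ih h).trans ((Nat.right_le_pair _ _).trans (Nat.le_succ _))

theorem DSystem.enc_arg_le {γ : Type} {rels : ℕ → Type} [Encodable γ]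
    [∀ n, Encodable (rels n)] (S : DSystem γ rels)
    {a : Σ n : ℕ, rels n × (Fin n → RTerm γ S.nvars)} (ha : a ∈ S.atoms) (i : Fin a.1) :
    (a.2.2 i).enc ≤ S.enc := by
  have hargs : (a.2.2 i).enc ≤ Encodable.encode (List.ofFn fun i => (a.2.2 i).enc) :=
    encode_le_encode_of_mem (a := (a.2.2 i).enc) ((List.mem_ofFn' _ _).2 ⟨i, rfl⟩)
  have hatom := encode_le_encode_of_mem (List.mem_map_of_mem (f := fun a =>
    (a.1, Encodable.encode a.2.1, List.ofFn fun i => (a.2.2 i).enc)) ha)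
  calc
    _ ≤ _ := hargs
    _ ≤ _ := (Nat.right_le_pair _ _).trans (Nat.right_le_pair _ _)
    _ ≤ _ := hatom
    _ ≤ S.enc := (Nat.right_le_pair _ _).trans (Nat.right_le_pair _ _)

section Adjoin

open Polynomial

variable {A : Type*} [CommRing A] {R : Subring A} {α : A}

theorem exists_aeval_eq_of_mem_closure {x : A} (hx : x ∈ Subring.closure ((R : Set A) ∪ {α})) :
    ∃ q : R[X], aeval α q = x := by
  change x ∈ (aeval α : R[X] →ₐ[R] A).toRingHom.range
  refine (Subring.closure_le.2 ?_) hx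
  rintro y (hy | rfl)
  · exact ⟨C ⟨y, hy⟩, aeval_C α _⟩
  · exact ⟨X, aeval_X y⟩

theorem exists_sum_mul_pow_eq_of_mem_closure [Nontrivial A] {p : R[X]} (hp : p.Monic)
    (hα : aeval α p = 0) {d : ℕ} (hd : p.natDegree = d) {x : A}
    (hx : x ∈ Subring.closure ((R : Set A) ∪ {α})) :
    ∃ y : Fin d → R, ∑ j, (y j : A) * α ^ (j : ℕ) = x := by
  subst hd
  obtain ⟨q, rfl⟩ := exists_aeval_eq_of_mem_closure hx
  have hp1 : p ≠ 1 := by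
    rintro rfl
    exact one_ne_zero ((map_one _).symm.trans hα)
  refine ⟨fun j => (q %ₘ p).coeff j, ?_⟩
  rw [← aeval_modByMonic_eq_self_of_root hα,
    aeval_eq_sum_range' (natDegree_modByMonic_lt q hp hp1), Finset.sum_range]
  rfl

theorem sum_mul_pow_mem_closure {d : ℕ} (y : Fin d → R) :
    ∑ j, (y j : A) * α ^ (j : ℕ) ∈ Subring.closure ((R : Set A) ∪ {α}) :=
  sum_mem fun j _ => mul_mem (Subring.subset_closure (.inl (y j).2))
    (pow_mem (Subring.subset_closure (.inr rfl)) _)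

/-- The elements of `R[α]` whose coefficients are the first `m * d` entries of `v`. -/
def adjoinPoint (α : A) {m d n : ℕ} (v : Fin (m * d + n) → R) (k : Fin m) :
    Subring.closure ((R : Set A) ∪ {α}) :=
  ⟨∑ j, (v (.castAdd n (finProdFinEquiv (k, j))) : A) * α ^ (j : ℕ), sum_mul_pow_mem_closure _⟩

theorem exists_adjoinPoint_append_eq {d : ℕ}
    (hspan : ∀ z ∈ Subring.closure ((R : Set A) ∪ {α}),
      ∃ y : Fin d → R, ∑ j, (y j : A) * α ^ (j : ℕ) = z) {m : ℕ}
    (z : Fin m → Subring.closure ((R : Set A) ∪ {α})) :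
    ∃ y : Fin (m * d) → R, ∀ (n : ℕ) (u : Fin n → R), adjoinPoint α (Fin.append y u) = z := by
  choose y hy using fun k => hspan (z k) (z k).2
  refine ⟨fun q => y q.divNat q.modNat, fun n u => funext fun k => Subtype.ext ?_⟩
  refine (Finset.sum_congr rfl fun j _ => ?_).trans (hy k)
  obtain ⟨hk, hj⟩ := Prod.ext_iff.1 (finProdFinEquiv.symm_apply_apply (k, j))
  rw [Fin.append_left]
  exact congrArg (fun r : R => (r : A) * _) (congrArg₂ y hk hj)

theorem eval_atRoot {γ : Type} {Ω : Type*} [CommRing Ω] [Algebra A Ω] (cI : γ → R) {m d W : ℕ}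
    {i₀ : Fin d} {x : Fin d → Ω} (hx : x i₀ = algebraMap A Ω α) (v : Fin (m * d + (W + 1)) → R)
    (t : RTerm (γ ⊕ Unit) m) :
    (t.atRoot W i₀).eval (Sum.elim (algebraMap R Ω ∘ cI) x) (algebraMap R Ω ∘ v) =
      algebraMap A Ω (t.eval (cIA R α cI) (adjoinPoint α v)).1 := by
  refine Eq.trans ?_ (RTerm.map_eval ((algebraMap A Ω).comp (Subring.subtype _)) _ _ t).symm
  rw [RTerm.atRoot, RTerm.eval_bind]
  congr 1
  · funext c
    rcases c with _ | _
    · rfl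
    · exact hx
  · funext k
    simp only [RTerm.eval_subst, RTerm.eval_horner, RTerm.eval, Sum.elim_inr, hx, adjoinPoint,
      Function.comp_apply, RingHom.comp_apply, Subring.subtype_apply, map_sum, map_mul, map_pow]
    rfl

variable {rels : ℕ → Type} {relI : ∀ n, rels n → (Fin n → R) → Prop}

theorem relIA_iff {n : ℕ} (ρ : relsA rels n) (v : Fin n → Subring.closure ((R : Set A) ∪ {α})) :
    relIA R α relI n ρ v ↔
      ∃ w : Fin n → R, (∀ i, (v i : A) = w i) ∧ ∀ ρ' ∈ oldSymbol ρ, relI n ρ' w := by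
  simp only [@eq_comm A (v _)]
  match n, ρ with
  | 0, _ | 1, .inl _ | _ + 2, _ =>
    exact exists_congr fun w => and_congr_right'
      ⟨fun h _ hρ => Option.some.inj hρ ▸ h, fun h => h _ rfl⟩
  | 1, .inr _ =>
    refine ⟨fun h => ⟨fun _ => ⟨_, h⟩, fun i => by rw [Subsingleton.elim i 0], nofun⟩, ?_⟩
    rintro ⟨w, hw, -⟩
    exact (hw 0).subst (motive := (· ∈ R)) (w 0).2

variable {γ : Type} [Encodable γ] [∀ n, Encodable (rels n)] {Ω : Type*} [CommRing Ω]
  [Algebra A Ω] [FaithfulSMul A Ω] {d : ℕ} {i₀ : Fin d} {x : Fin d → Ω} {cI : γ → R}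

theorem isSolution_toRootSystem_iff (hx : x i₀ = algebraMap A Ω α)
    (S : DSystem (γ ⊕ Unit) (relsA rels)) (v : Fin (S.nvars * d + (S.enc + 1)) → R) :
    (S.toRootSystem i₀).IsSolution cI relI x v ↔
      (∀ e ∈ S.eqs, e.1.eval (cIA R α cI) (adjoinPoint α v) =
        e.2.eval (cIA R α cI) (adjoinPoint α v)) ∧
      ∀ a ∈ S.atoms,
        (∀ i, ((a.2.2 i).eval (cIA R α cI) (adjoinPoint α v)).1 =
          v ((a.2.2 i).argVar d S.enc)) ∧
        ∀ ρ ∈ oldSymbol a.2.1, relI a.1 ρ fun i => v ((a.2.2 i).argVar d S.enc) := by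
  have hinj := FaithfulSMul.algebraMap_injective A Ω
  refine (RootSystem.isSolution_mk x).trans ?_
  simp only [List.forall_mem_append, List.forall_mem_map, List.forall_mem_flatMap,
    List.forall_mem_ofFn_iff, RTerm.eval_sub, eval_atRoot cI hx, sub_eq_zero, hinj.eq_iff,
    Subtype.val_inj, and_assoc, RTerm.eval]
  rw [forall₂_and]
  refine and_congr_right' (and_congr ?_ ?_)
  · exact forall₂_congr fun a _ => forall_congr' fun i => hinj.eq_iff (b := (v _ : A))
  · simp only [List.mem_filterMap, Option.map_eq_some_iff, forall_exists_index, and_imp]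
    exact ⟨fun h a ha ρ hρ => h _ a ha ρ hρ rfl, by rintro h _ a ha ρ hρ rfl; exact h a ha ρ hρ⟩

theorem holdsAt_toRootSystem_iff (hx : x i₀ = algebraMap A Ω α)
    (hspan : ∀ z ∈ Subring.closure ((R : Set A) ∪ {α}),
      ∃ y : Fin d → R, ∑ j, (y j : A) * α ^ (j : ℕ) = z)
    (S : DSystem (γ ⊕ Unit) (relsA rels)) :
    (S.toRootSystem i₀).HoldsAt cI relI x ↔ S.Solvable (cIA R α cI) (relIA R α relI) := by
  refine (exists_congr fun v => isSolution_toRootSystem_iff hx S v).trans ⟨?_, ?_⟩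
  · rintro ⟨v, heqs, hatoms⟩
    exact ⟨adjoinPoint α v, heqs, fun a ha => (relIA_iff ..).2 ⟨_, hatoms a ha⟩⟩
  · rintro ⟨z, heqs, hatoms⟩
    obtain ⟨y, hy⟩ := exists_adjoinPoint_append_eq hspan z
    let value (t : RTerm (γ ⊕ Unit) S.nvars) : A := (t.eval (cIA R α cI) z).1
    let u (k : Fin (S.enc + 1)) : R :=
      Function.extend RTerm.enc (Function.invFun Subtype.val ∘ value) 0 k
    have hu {t} (ht : t.enc ≤ S.enc) (r : R) (hr : value t = r) :
        Fin.append y u (t.argVar d S.enc) = r := by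
      rw [RTerm.argVar, Fin.append_right]
      simp only [u, Fin.val_ofNat, Nat.mod_eq_of_lt (Nat.lt_succ_of_le ht)]
      rw [RTerm.enc_injective.extend_apply, Function.comp_apply, hr]
      exact Function.leftInverse_invFun Subtype.val_injective r
    refine ⟨Fin.append y u, ?_⟩
    rw [hy]
    refine ⟨heqs, fun a ha => ?_⟩
    obtain ⟨w, hw, hrel⟩ := (relIA_iff ..).1 (hatoms a ha)
    have huw (i) : Fin.append y u ((a.2.2 i).argVar d S.enc) = w i :=
      hu (S.enc_arg_le ha i) _ (hw i)
    simpa only [huw] using And.intro hw hrel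

end Adjoin

theorem primrec_pi_iff {α σ : Type*} [Primcodable α] [Primcodable σ] {n : ℕ} {f : α → Fin n → σ} :
    Primrec f ↔ ∀ i, Primrec fun a => f a i :=
  ⟨fun hf i => Primrec.fin_app.comp hf (.const i),
    fun hf => Primrec.fin_curry.2 (Primrec.fin_curry₁ (f := fun i a => f a i).2 hf).swap⟩

/-- Primitive recursive operations on `σ` interpreting the constructors of terms, variables and
constants being given by their Gödel numbers. -/
structure TermOps (σ : Type) [Primcodable σ] where
  var : ℕ → σ
  const : ℕ → σ
  zero : σ
  one : σ
  add : σ → σ → σ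
  mul : σ → σ → σ
  neg : σ → σ
  primrec_var : Primrec var
  primrec_const : Primrec const
  primrec_add : Primrec₂ add
  primrec_mul : Primrec₂ mul
  primrec_neg : Primrec neg

namespace TermOps

variable {γ : Type} [Encodable γ] {m : ℕ} {σ : Type} [Primcodable σ]

/-- The value of a term under the operations `O`. -/
def fold (O : TermOps σ) : RTerm γ m → σ
  | .var k => O.var k
  | .const c => O.const (Encodable.encode c)
  | .zero => O.zero
  | .one => O.one
  | .add s t => O.add (O.fold s) (O.fold t)
  | .mul s t => O.mul (O.fold s) (O.fold t)
  | .neg s => O.neg (O.fold s)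

/-- The value of the term with Gödel number `L.length`, given the list `L` of the values of the
terms with smaller Gödel numbers. -/
def step (O : TermOps σ) (L : List σ) : σ :=
  let x := L.length.unpair.2
  let l k := L.getD k O.zero
  [O.var x, O.const x, O.zero, O.one, O.add (l x.unpair.1) (l x.unpair.2),
    O.mul (l x.unpair.1) (l x.unpair.2), O.neg (l x)].getD L.length.unpair.1 O.zero

/-- The value of the term with Gödel number `n`. -/
def code (O : TermOps σ) (n : ℕ) : σ :=
  O.step ((List.range n).attach.map fun k : {k // k ∈ List.range n} => O.code k.1)
termination_by n
decreasing_by exact List.mem_range.1 k.2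

variable (O : TermOps σ)

theorem code_eq_step (n : ℕ) : O.code n = O.step ((List.range n).map O.code) := by
  rw [code, List.attach_map_val]

theorem code_enc (t : RTerm γ m) : O.code t.enc = O.fold t := by
  have hlt {i x y : ℕ} (h : y ≤ x) : y < Nat.pair (i + 1) x :=
    h.trans_lt ((Nat.right_le_pair 0 x).trans_lt (Nat.pair_lt_pair_left x i.succ_pos))
  induction t with rw [code_eq_step, step, List.length_map, List.length_range]
  | var | const | zero | one => simp [RTerm.enc, fold]
  | add s t hs ht | mul s t hs ht =>
    simp [RTerm.enc, fold, hlt, Nat.left_le_pair, Nat.right_le_pair, hs, ht]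
  | neg s hs => simp [RTerm.enc, fold, hlt, hs]

theorem primrec_step : Primrec O.step := by
  have hx : Primrec fun L : List σ => L.length.unpair.2 :=
    Primrec.snd.comp (Primrec.unpair.comp .list_length)
  have hl {g : ℕ → ℕ} (hg : Primrec g) :
      Primrec fun L : List σ => L.getD (g L.length.unpair.2) O.zero :=
    (Primrec.list_getD _).comp .id (hg.comp hx)
  have hl₁ := hl (Primrec.fst.comp .unpair)
  have hl₂ := hl (Primrec.snd.comp .unpair)
  exact (Primrec.list_getD _).comp
    (Primrec.list_cons.comp (O.primrec_var.comp hx) <|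
      Primrec.list_cons.comp (O.primrec_const.comp hx) <|
      Primrec.list_cons.comp (.const _) <|
      Primrec.list_cons.comp (.const _) <|
      Primrec.list_cons.comp (O.primrec_add.comp hl₁ hl₂) <|
      Primrec.list_cons.comp (O.primrec_mul.comp hl₁ hl₂) <|
      Primrec.list_cons.comp (O.primrec_neg.comp (hl .id)) (.const []))
    (Primrec.fst.comp (Primrec.unpair.comp .list_length))

theorem primrec_code : Primrec O.code :=
  (Primrec.nat_strong_rec (fun _ : Unit => O.code) (g := fun _ L => some (O.step L))
    (Primrec.option_some.comp (O.primrec_step.comp .snd))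
    fun _ n => congrArg some (O.code_eq_step n).symm).comp (.const ()) .id

/-- The operations computing the Gödel number of a term after a substitution, in which the variable
and the constant with Gödel number `k` are replaced by terms with Gödel numbers `v k` and `c k`. -/
def bind {v c : ℕ → ℕ} (hv : Primrec v) (hc : Primrec c) : TermOps ℕ where
  var := v
  const := c
  zero := .pair 2 0
  one := .pair 3 0
  add s t := .pair 4 (.pair s t)
  mul s t := .pair 5 (.pair s t)
  neg s := .pair 6 s
  primrec_var := hv
  primrec_const := hc
  primrec_add := Primrec₂.natPair.comp (.const 4) Primrec₂.natPair
  primrec_mul := Primrec₂.natPair.comp (.const 5) Primrec₂.natPair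
  primrec_neg := Primrec₂.natPair.comp (.const 6) .id

theorem code_bind {γ' : Type} [Encodable γ'] {m' : ℕ} {f : γ → RTerm γ' m'}
    {g : Fin m → RTerm γ' m'} {v c : ℕ → ℕ} (hv : Primrec v) (hc : Primrec c)
    (hg : ∀ k, (g k).enc = v k) (hf : ∀ a, (f a).enc = c (Encodable.encode a)) (t : RTerm γ m) :
    (bind hv hc).code t.enc = (t.bind f g).enc := by
  rw [code_enc]
  induction t with
  | var k => exact (hg k).symm
  | const a => exact (hf a).symm
  | zero | one => rfl
  | add s t hs ht | mul s t hs ht => exact congrArg (Nat.pair _) (congrArg₂ Nat.pair hs ht)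
  | neg s hs => exact congrArg (Nat.pair _) hs

end TermOps

namespace RTerm

variable {γ : Type} [Encodable γ] {m n : ℕ}

/-- The Gödel number of a term after a substitution of terms with Gödel numbers `w` for its
variables. -/
def substCode (w : Fin n → ℕ) : RTerm γ n → ℕ
  | .var k => w k
  | .const c => (const c : RTerm γ 0).enc
  | .zero => (zero : RTerm γ 0).enc
  | .one => (one : RTerm γ 0).enc
  | .add s t => .pair 4 (.pair (s.substCode w) (t.substCode w))
  | .mul s t => .pair 5 (.pair (s.substCode w) (t.substCode w))
  | .neg s => .pair 6 (s.substCode w)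

theorem enc_subst (g : Fin n → RTerm γ m) (t : RTerm γ n) :
    (t.subst g).enc = t.substCode fun k => (g k).enc := by
  induction t <;> simp_all [bind, enc, substCode]

theorem primrec_substCode (t : RTerm γ n) : Primrec fun w => t.substCode w := by
  induction t with
  | var k => exact primrec_pi_iff.1 .id k
  | const | zero | one => exact .const _
  | add s t hs ht => exact Primrec₂.natPair.comp (.const 4) (Primrec₂.natPair.comp hs ht)
  | mul s t hs ht => exact Primrec₂.natPair.comp (.const 5) (Primrec₂.natPair.comp hs ht)
  | neg s hs => exact Primrec₂.natPair.comp (.const 6) hs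

theorem enc_rename_castAdd (t : RTerm γ n) : (t.rename (Fin.castAdd m)).enc = t.enc := by
  induction t <;> simp_all [bind, enc]

end RTerm

namespace TermOps

variable {γ : Type} [Encodable γ] {d m : ℕ}

/-- The operations computing the Gödel number of a term after a shift of its variables. -/
def shift (n : ℕ) : TermOps ℕ :=
  bind (v := fun k => .pair 0 (n + k)) (c := fun c => .pair 1 c)
    (Primrec₂.natPair.comp (.const 0) (Primrec.nat_add.comp (.const n) .id))
    (Primrec₂.natPair.comp (.const 1) .id)

theorem code_shift (n : ℕ) (t : RTerm γ m) :
    (shift n).code t.enc = (t.rename (Fin.natAdd n)).enc :=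
  code_bind _ _ (fun _ => rfl) (fun _ => rfl) t

/-- The operations computing the Gödel number of `RTerm.atRoot`. A Gödel number of a constant over
`R[α]` is even for an original constant and odd for `α`. -/
def atRoot (γ : Type) [Encodable γ] (i₀ : Fin d) : TermOps ℕ :=
  bind
    (v := fun k => (RTerm.horner (γ := γ ⊕ Fin d) (.const (.inr i₀)) .var).substCode
      fun j : Fin d => .pair 0 (j + d * k))
    (c := fun c => .pair 1 (if c % 2 = 0 then c else Encodable.encode (.inr i₀ : γ ⊕ Fin d)))
    ((RTerm.primrec_substCode _).comp <| primrec_pi_iff.2 fun _ =>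
      Primrec₂.natPair.comp (.const 0) <|
        Primrec.nat_add.comp (.const _) (Primrec.nat_mul.comp (.const d) .id))
    (Primrec₂.natPair.comp (.const 1) <| Primrec.ite
      (Primrec.eq.comp (Primrec.nat_mod.comp .id (.const 2)) (.const 0)) .id (.const _))

theorem code_atRoot (W : ℕ) (i₀ : Fin d) (t : RTerm (γ ⊕ Unit) m) :
    (atRoot γ i₀).code t.enc = (t.atRoot W i₀).enc := by
  refine code_bind _ _ (fun k => RTerm.enc_subst _ _) (fun c => ?_) t
  rcases c with c | c <;> simp [RTerm.enc]

end TermOps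

namespace CoordinateTerms

variable {γ : Type} [Encodable γ] {d N m : ℕ}

/-- The operations computing the Gödel numbers of the coordinates of a term. A Gödel number of a
constant is even for an original constant and odd for a root. -/
def ops (C : CoordinateTerms γ d N) : TermOps (Fin N → ℕ) where
  var k i := (C.scalar i).substCode fun _ => .pair 0 k
  const c i := if c % 2 = 0 then (C.scalar i).substCode fun _ => .pair 1 (c / 2)
    else (List.ofFn fun j => (C.root j i).substCode Fin.elim0).getD (c / 2) 0
  zero _ := .pair 2 0
  one i := (C.scalar i).substCode fun _ => .pair 3 0
  add a b i := .pair 4 (.pair (a i) (b i))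
  mul a b i := (C.mul i).substCode (Fin.append a b)
  neg a i := .pair 6 (a i)
  primrec_var := primrec_pi_iff.2 fun i => (C.scalar i).primrec_substCode.comp <|
    primrec_pi_iff.2 fun _ => Primrec₂.natPair.comp (.const 0) .id
  primrec_const := primrec_pi_iff.2 fun i =>
    have hhalf : Primrec fun c : ℕ => c / 2 := Primrec.nat_div.comp .id (.const 2)
    Primrec.ite (Primrec.eq.comp (Primrec.nat_mod.comp .id (.const 2)) (.const 0))
      ((C.scalar i).primrec_substCode.comp <|
        primrec_pi_iff.2 fun _ => Primrec₂.natPair.comp (.const 1) hhalf)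
      ((Primrec.list_getD 0).comp (.const _) hhalf)
  primrec_add := primrec_pi_iff.2 fun i => Primrec₂.natPair.comp (.const 4) <|
    Primrec₂.natPair.comp (Primrec.fin_app.comp .fst (.const i))
      (Primrec.fin_app.comp .snd (.const i))
  primrec_mul := by
    refine primrec_pi_iff.2 fun i => (C.mul i).primrec_substCode.comp (primrec_pi_iff.2 fun j => ?_)
    refine j.addCases (fun j => ?_) fun j => ?_ <;> simp only [Fin.append_left, Fin.append_right]
    · exact Primrec.fin_app.comp .fst (.const j)
    · exact Primrec.fin_app.comp .snd (.const j)
  primrec_neg := primrec_pi_iff.2 fun i => Primrec₂.natPair.comp (.const 6) <|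
    primrec_pi_iff.1 (.id (α := Fin N → ℕ)) i

theorem code_ops (C : CoordinateTerms γ d N) (t : RTerm (γ ⊕ Fin d) m) :
    C.ops.code t.enc = fun i => (C.coords t i).enc := by
  rw [TermOps.code_enc]
  induction t with
  | var k => exact funext fun i => (RTerm.enc_subst (fun _ => .var k) (C.scalar i)).symm
  | const c =>
    funext i
    rcases c with c | j
    · refine Eq.trans ?_ (RTerm.enc_subst _ (C.scalar i)).symm
      simp [TermOps.fold, ops, RTerm.enc]
    · refine Eq.trans ?_ (RTerm.enc_subst _ (C.root j i)).symm
      have hcode : Encodable.encode (.inr j : γ ⊕ Fin d) = 2 * (j : ℕ) + 1 := rfl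
      have hhalf : (2 * (j : ℕ) + 1) / 2 = j := by lia
      simp [TermOps.fold, ops, hcode, hhalf, Subsingleton.elim _ Fin.elim0]
  | zero => rfl
  | one => exact funext fun i => (RTerm.enc_subst (fun _ => .one) (C.scalar i)).symm
  | add s t hs ht => rw [TermOps.fold, hs, ht]; rfl
  | mul s t hs ht =>
    funext i
    rw [TermOps.fold, hs, ht, coords, RTerm.enc_subst]
    refine congrArg (RTerm.substCode · (C.mul i)) (funext fun j => ?_)
    refine j.addCases (fun j => ?_) fun j => ?_ <;> simp only [Fin.append_left, Fin.append_right]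
  | neg s hs => rw [TermOps.fold, hs]; rfl

end CoordinateTerms

section Tuples

variable {α α' : Type*}

theorem tuples_map (f : α → α') (l : List α) (n : ℕ) :
    tuples (l.map f) n = (tuples l n).map (List.Vector.map f) := by
  induction n with
  | zero => rfl
  | succ n ih =>
    simp [tuples, ih, List.flatMap_map, List.map_flatMap, Function.comp_def]

theorem primrec_tuples [Primcodable α] (n : ℕ) : Primrec fun l : List α => tuples l n := by
  induction n with
  | zero => exact .const _
  | succ n ih =>
    exact Primrec.list_flatMap .id (Primrec.list_map (ih.comp .fst)
      (Primrec.vector_cons.comp (Primrec.snd.comp .fst) .snd))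

end Tuples

/-- The number of variables, the Gödel numbers of the equations and those of the atoms. -/
def DSystem.code {γ : Type} {rels : ℕ → Type} [Encodable γ] [∀ n, Encodable (rels n)]
    (S : DSystem γ rels) : ℕ × List (ℕ × ℕ) × List (ℕ × ℕ × List ℕ) :=
  (S.nvars, S.eqs.map fun e => (e.1.enc, e.2.enc), S.atoms.map fun a =>
    (a.1, Encodable.encode a.2.1, List.ofFn fun i => (a.2.2 i).enc))

theorem DSystem.encode_code {γ : Type} {rels : ℕ → Type} [Encodable γ] [∀ n, Encodable (rels n)]
    (S : DSystem γ rels) : Encodable.encode S.code = S.enc :=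
  rfl

namespace RootSystem

variable {γ : Type} {rels : ℕ → Type} [Encodable γ] [∀ n, Encodable (rels n)] {d N M K : ℕ}

/-- The number of variables, the Gödel numbers of the conditions and those of the atoms. -/
def code (φ : RootSystem γ rels d) : ℕ × List ℕ × List (ℕ × ℕ × List ℕ) :=
  (φ.nvars, φ.conds.map RTerm.enc, φ.atoms.map fun a =>
    (a.1, Encodable.encode a.2.1, List.ofFn fun i => (a.2.2 i : ℕ)))

/-- The effect of `RootSystem.eliminate` on codes. -/
def eliminateCode (C : CoordinateTerms γ d N) (F : Fin K → RTerm γ (M * N))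
    (x : ℕ × List ℕ × List (ℕ × ℕ × List ℕ)) : ℕ × List (ℕ × ℕ) × List (ℕ × ℕ × List ℕ) :=
  (x.1, (tuples (x.2.1.map C.ops.code) M).flatMap fun w => List.ofFn fun k =>
      ((F k).substCode fun q => w.get q.divNat q.modNat, .pair 2 0),
    x.2.2.map fun a => (a.1, a.2.1, a.2.2.map (.pair 0)))

theorem code_eliminate (C : CoordinateTerms γ d N) (F : Fin K → RTerm γ (M * N))
    (φ : RootSystem γ rels d) : (φ.eliminate C F).code = eliminateCode C F φ.code := by
  refine Prod.ext rfl (Prod.ext ?_ ?_)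
  · have hcoords : φ.code.2.1.map C.ops.code =
        (φ.conds.map C.coords).map fun a i => (a i).enc := by
      simp only [code, List.map_map]
      exact List.map_congr_left fun t _ => C.code_ops t
    simp only [DSystem.code, eliminate, eliminateCode, hcoords, tuples_map]
    simp [List.map_flatMap, List.flatMap_map, List.map_ofFn, Function.comp_def, RTerm.enc_subst,
      RTerm.enc]
  · simp [DSystem.code, eliminate, eliminateCode, code, List.map_ofFn, Function.comp_def, RTerm.enc]

theorem primrec_eliminateCode (C : CoordinateTerms γ d N) (F : Fin K → RTerm γ (M * N)) :
    Primrec (eliminateCode C F) := by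
  have hrows : Primrec fun x : ℕ × List ℕ × List (ℕ × ℕ × List ℕ) =>
      tuples (x.2.1.map C.ops.code) M :=
    (primrec_tuples M).comp <| Primrec.list_map (Primrec.fst.comp .snd)
      (C.ops.primrec_code.comp .snd)
  have heqs : Primrec fun w : List.Vector (Fin N → ℕ) M => List.ofFn fun k =>
      ((F k).substCode fun q => w.get q.divNat q.modNat, Nat.pair 2 0) :=
    Primrec.list_ofFn fun k => .pair ((F k).primrec_substCode.comp <| primrec_pi_iff.2 fun q =>
      Primrec.fin_app.comp (Primrec.vector_get.comp .id (.const _)) (.const _)) (.const _)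
  have hatom : Primrec fun a : ℕ × ℕ × List ℕ => (a.1, a.2.1, a.2.2.map (Nat.pair 0)) :=
    .pair .fst <| .pair (Primrec.fst.comp .snd) <|
      Primrec.list_map (Primrec.snd.comp .snd) (Primrec₂.natPair.comp (.const 0) .snd)
  exact .pair .fst <| .pair (Primrec.list_flatMap hrows (heqs.comp .snd)) <|
    Primrec.list_map (Primrec.snd.comp .snd) (hatom.comp .snd)

/-- The effect of `RootSystem.conj φ` on codes. -/
def conjCode (φ : RootSystem γ rels d) (x : ℕ × List ℕ × List (ℕ × ℕ × List ℕ)) :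
    ℕ × List ℕ × List (ℕ × ℕ × List ℕ) :=
  (φ.nvars + x.1, φ.code.2.1 ++ x.2.1.map (TermOps.shift φ.nvars).code,
    φ.code.2.2 ++ x.2.2.map fun a => (a.1, a.2.1, a.2.2.map (φ.nvars + ·)))

theorem code_conj (φ ψ : RootSystem γ rels d) : (φ.conj ψ).code = φ.conjCode ψ.code := by
  simp [code, conj, conjCode, Function.comp_def, RTerm.enc_rename_castAdd, TermOps.code_shift]

theorem primrec_conjCode (φ : RootSystem γ rels d) : Primrec φ.conjCode := by
  have hatom : Primrec fun a : ℕ × ℕ × List ℕ => (a.1, a.2.1, a.2.2.map (φ.nvars + ·)) :=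
    .pair .fst <| .pair (Primrec.fst.comp .snd) <|
      Primrec.list_map (Primrec.snd.comp .snd) (Primrec.nat_add.comp (.const _) .snd)
  exact .pair (Primrec.nat_add.comp (.const _) .fst) <| .pair
    (Primrec.list_append.comp (.const _) <| Primrec.list_map (Primrec.fst.comp .snd)
      ((TermOps.shift _).primrec_code.comp .snd))
    (Primrec.list_append.comp (.const _) <| Primrec.list_map (Primrec.snd.comp .snd)
      (hatom.comp .snd))

end RootSystem

/-- The effect of `oldSymbol` on Gödel numbers. -/
def oldSymbolCode (n r : ℕ) : Option ℕ :=
  if n = 1 then if r % 2 = 0 then some (r / 2) else none else some r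

theorem encode_oldSymbol {rels : ℕ → Type} [∀ n, Encodable (rels n)] {n : ℕ} (ρ : relsA rels n) :
    (oldSymbol ρ).map Encodable.encode = oldSymbolCode n (Encodable.encode ρ) := by
  match n, ρ with
  | 0, _ | _ + 2, _ => rfl
  | 1, .inl ρ =>
    change some _ = if 2 * Encodable.encode ρ % 2 = 0 then some (2 * Encodable.encode ρ / 2) else _
    simp
  | 1, .inr _ => rfl

theorem primrec_oldSymbolCode : Primrec₂ oldSymbolCode :=
  Primrec.ite (Primrec.eq.comp .fst (.const 1))
    (Primrec.ite (Primrec.eq.comp (Primrec.nat_mod.comp .snd (.const 2)) (.const 0))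
      (Primrec.option_some.comp (Primrec.nat_div.comp .snd (.const 2))) (.const none))
    (Primrec.option_some.comp .snd)

namespace DSystem

variable {γ : Type} {rels : ℕ → Type} [Encodable γ] [∀ n, Encodable (rels n)] {d : ℕ}

/-- The effect of `DSystem.toRootSystem i₀` on codes. -/
def toRootSystemCode (γ : Type) [Encodable γ] (i₀ : Fin d)
    (x : ℕ × List (ℕ × ℕ) × List (ℕ × ℕ × List ℕ)) : ℕ × List ℕ × List (ℕ × ℕ × List ℕ) :=
  let sub s t := Nat.pair 4 (.pair s (.pair 6 t))
  let atRoot := (TermOps.atRoot γ i₀).code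
  let argVar t := x.1 * d + t % (Encodable.encode x + 1)
  (x.1 * d + (Encodable.encode x + 1),
    x.2.1.map (fun e => sub (atRoot e.1) (atRoot e.2)) ++
      x.2.2.flatMap fun a => a.2.2.map fun t => sub (atRoot t) (.pair 0 (argVar t)),
    x.2.2.filterMap fun a => (oldSymbolCode a.1 a.2.1).map fun r => (a.1, r, a.2.2.map argVar))

theorem code_toRootSystem (i₀ : Fin d) (S : DSystem (γ ⊕ Unit) (relsA rels)) :
    (S.toRootSystem i₀).code = toRootSystemCode γ i₀ S.code := by
  refine Prod.ext rfl (Prod.ext ?_ ?_)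
  · simp only [RootSystem.code, toRootSystem, toRootSystemCode, encode_code]
    simp [code, Function.comp_def, RTerm.sub, RTerm.enc, RTerm.argVar, TermOps.code_atRoot S.enc,
      List.map_flatMap, List.flatMap_map]
  · simp only [RootSystem.code, toRootSystem, toRootSystemCode, encode_code]
    simp [code, Function.comp_def, RTerm.argVar, List.map_filterMap, List.filterMap_map,
      ← encode_oldSymbol]

theorem primrec_toRootSystemCode (i₀ : Fin d) : Primrec (toRootSystemCode γ i₀) := by
  have hsub : Primrec₂ fun s t => Nat.pair 4 (.pair s (.pair 6 t)) :=
    Primrec₂.natPair.comp (.const 4) <| Primrec₂.natPair.comp .fst <|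
      Primrec₂.natPair.comp (.const 6) .snd
  have hatRoot := (TermOps.atRoot γ i₀).primrec_code
  have hargVar : Primrec₂ fun (x : ℕ × List (ℕ × ℕ) × List (ℕ × ℕ × List ℕ)) t =>
      x.1 * d + t % (Encodable.encode x + 1) :=
    Primrec.nat_add.comp (Primrec.nat_mul.comp (Primrec.fst.comp .fst) (.const d)) <|
      Primrec.nat_mod.comp .snd (Primrec.succ.comp (Primrec.encode.comp .fst))
  have hargs : Primrec₂ fun (x : ℕ × List (ℕ × ℕ) × List (ℕ × ℕ × List ℕ))
      (a : ℕ × ℕ × List ℕ) => a.2.2.map fun t => x.1 * d + t % (Encodable.encode x + 1) :=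
    Primrec.list_map (Primrec.snd.comp <| Primrec.snd.comp .snd)
      (hargVar.comp (Primrec.fst.comp .fst) .snd)
  refine .pair ?_ (.pair (Primrec.list_append.comp ?_ ?_) ?_)
  · exact Primrec.nat_add.comp (Primrec.nat_mul.comp .fst (.const d))
      (Primrec.succ.comp .encode)
  · exact Primrec.list_map (Primrec.fst.comp .snd) <|
      hsub.comp (hatRoot.comp <| Primrec.fst.comp .snd) (hatRoot.comp <| Primrec.snd.comp .snd)
  · refine Primrec.list_flatMap (Primrec.snd.comp .snd) <|
      Primrec.list_map (Primrec.snd.comp <| Primrec.snd.comp .snd) <|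
        hsub.comp (hatRoot.comp .snd) <| Primrec₂.natPair.comp (.const 0) ?_
    exact hargVar.comp (Primrec.fst.comp .fst) .snd
  · refine Primrec.listFilterMap (Primrec.snd.comp .snd) <|
      Primrec.option_map (primrec_oldSymbolCode.comp (Primrec.fst.comp .snd)
        (Primrec.fst.comp <| Primrec.snd.comp .snd)) ?_
    exact Primrec.pair (Primrec.fst.comp <| Primrec.snd.comp .fst) <| .pair .snd <|
      hargs.comp (Primrec.fst.comp .fst) (Primrec.snd.comp .fst)

end DSystem

section Roots

open Polynomial

theorem exists_monic_lift {A : Type*} [CommRing A] [Nontrivial A] {R : Subring A} {γ : Type*}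
    {cI : γ → R} {P : Polynomial A} (hP : P.Monic)
    (hcoeff : ∀ i, P.coeff i ∈ Subring.closure (Set.range fun g => (cI g : A))) :
    ∃ p : Polynomial (Subring.closure (Set.range cI)), p.Monic ∧
      p.map (algebraMap (Subring.closure (Set.range cI)) A) = P := by
  have hrange : Subring.closure (Set.range fun g => (cI g : A)) =
      (Subring.closure (Set.range cI)).map R.subtype := by
    rw [RingHom.map_closure, ← Set.range_comp]
    rfl
  have hlift : P ∈ lifts (algebraMap (Subring.closure (Set.range cI)) A) := by
    refine (lifts_iff_coeff_lifts P).2 fun i => ?_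
    obtain ⟨a, ha, hai⟩ := hrange.le (hcoeff i)
    exact ⟨⟨a, ha⟩, hai⟩
  obtain ⟨p, hp, -, hmonic⟩ := lifts_and_natDegree_eq_and_monic hlift hP
  exact ⟨p, hmonic, hp⟩

theorem exists_map_eq_prod_X_sub_C {A : Type*} (Ω : Type*) [CommRing A] [Field Ω] [IsAlgClosed Ω]
    [Algebra A Ω] {P : Polynomial A} (hP : P.Monic) :
    ∃ β : Fin P.natDegree → Ω, P.map (algebraMap A Ω) = ∏ i, (X - C (β i)) := by
  have hlength : P.natDegree = (P.map (algebraMap A Ω)).roots.toList.length := by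
    rw [Multiset.length_toList, ← (IsAlgClosed.splits _).natDegree_eq_card_roots,
      hP.natDegree_map]
  rw [hlength]
  refine ⟨fun i => (P.map (algebraMap A Ω)).roots.toList[(i : ℕ)], ?_⟩
  rw [Fin.prod_univ_fun_getElem _ fun a => X - C a, ← Multiset.prod_coe, ← Multiset.map_coe,
    Multiset.coe_toList]
  exact (IsAlgClosed.splits _).eq_prod_roots_of_monic (hP.map _)

end Roots

theorem HTPPos.of_primrec_code {γ γ' : Type} {rels rels' : ℕ → Type} [Encodable γ] [Encodable γ']
    [∀ n, Encodable (rels n)] [∀ n, Encodable (rels' n)] {T T' : Type*} [Ring T] [Ring T']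
    {cI : γ → T} {relI : ∀ n, rels n → (Fin n → T) → Prop} {cI' : γ' → T'}
    {relI' : ∀ n, rels' n → (Fin n → T') → Prop} (hT : HTPPos T cI relI)
    {f : ℕ × List (ℕ × ℕ) × List (ℕ × ℕ × List ℕ) → ℕ × List (ℕ × ℕ) × List (ℕ × ℕ × List ℕ)}
    (hf : Primrec f) {g : DSystem γ' rels' → DSystem γ rels} (hgf : ∀ S, (g S).code = f S.code)
    (hg : ∀ S, (g S).Solvable cI relI ↔ S.Solvable cI' relI') : HTPPos T' cI' relI' := by
  obtain ⟨dec, hdec, hspec⟩ := hT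
  refine ⟨fun n => dec (Encodable.encode (f ((Encodable.decode n).getD (0, [], [])))), ?_,
    fun S => ?_⟩
  · exact hdec.comp (Primrec.encode.comp <| hf.comp <|
      Primrec.option_getD.comp .decode (.const _)).to_comp
  · simp only [← hg, hspec, ← DSystem.encode_code, hgf, Encodable.encodek, Option.getD_some]

namespace RootSystem

variable {γ : Type} {rels : ℕ → Type} {R Ω : Type*} [CommRing R] [CommRing Ω] [Algebra R Ω] {d : ℕ}

theorem exists_holdsAt_iff_exists_holdsAt_conj (cI : γ → R)
    (relI : ∀ n, rels n → (Fin n → R) → Prop) (β : Fin d → Ω) :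
    ∃ φ : RootSystem γ rels d, ∀ ψ : RootSystem γ rels d,
      ψ.HoldsAt cI relI β ↔ ∃ σ : Equiv.Perm (Fin d), (φ.conj ψ).HoldsAt cI relI (β ∘ σ) := by
  have hset := exists_one_mem_iff_inter_nonempty
    (Set.range fun ψ : RootSystem γ rels d =>
      {σ : Equiv.Perm (Fin d) | ψ.HoldsAt cI relI (β ∘ σ)}) ?_ ?_ ?_
  · obtain ⟨_, ⟨φ, rfl⟩, hφ⟩ := hset
    refine ⟨φ, fun ψ => (hφ _ ⟨ψ, rfl⟩).trans (exists_congr fun σ => ?_)⟩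
    exact (holdsAt_conj ..).symm
  · exact ⟨empty, Set.eq_univ_of_forall fun _ => holdsAt_empty _⟩
  · rintro _ ⟨φ, rfl⟩ _ ⟨ψ, rfl⟩
    exact ⟨φ.conj ψ, Set.ext fun _ => holdsAt_conj ..⟩
  · rintro _ ⟨φ, rfl⟩ τ
    exact ⟨φ.permute τ, Set.ext fun _ => holdsAt_permute ..⟩

end RootSystem

theorem HTPPos.adjoin {A Ω : Type*} [CommRing A] [CommRing Ω] [IsDomain Ω] [Algebra A Ω]
    [FaithfulSMul A Ω]
    {γ : Type} {rels : ℕ → Type} [Encodable γ] [∀ n, Encodable (rels n)] {R : Subring A}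
    {cI : γ → R} {relI : ∀ n, rels n → (Fin n → R) → Prop} {α : A} {d : ℕ} {β : Fin d → Ω}
    {i₀ : Fin d} {p : Polynomial (Subring.closure (Set.range cI))} (hmonic : p.Monic)
    (hp : p.map (algebraMap (Subring.closure (Set.range cI)) Ω) =
      ∏ i, (Polynomial.X - Polynomial.C (β i)))
    (hβ : β i₀ = algebraMap A Ω α)
    (hspan : ∀ z ∈ Subring.closure ((R : Set A) ∪ {α}),
      ∃ y : Fin d → R, ∑ j, (y j : A) * α ^ (j : ℕ) = z)
    (hR : HTPPos R cI relI) :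
    HTPPos (Subring.closure ((R : Set A) ∪ {α})) (cIA R α cI) (relIA R α relI) := by
  have : FaithfulSMul R Ω := .trans R A Ω
  obtain ⟨N, K, C, F, hCF⟩ := RootSystem.exists_eliminate_solvable_iff cI hmonic hp
  obtain ⟨φ, hφ⟩ := RootSystem.exists_holdsAt_iff_exists_holdsAt_conj cI relI β
  refine hR.of_primrec_code (g := fun S => (φ.conj (S.toRootSystem i₀)).eliminate C F)
    ((RootSystem.primrec_eliminateCode C F).comp <| φ.primrec_conjCode.comp <|
      DSystem.primrec_toRootSystemCode (γ := γ) i₀) (fun S => ?_) fun S => ?_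
  · rw [RootSystem.code_eliminate, RootSystem.code_conj, DSystem.code_toRootSystem]
  · rw [hCF, ← hφ, holdsAt_toRootSystem_iff hβ hspan]

/-- Let `R` be an integral domain (a subring of a domain `A`), considered with a language
extending the language of rings by constants `γ` and relations `rels`, and suppose
Hilbert's tenth problem over `(R, L)` has a positive answer.  Let `α ∈ A` be integral
over `R`, with a monic polynomial relation whose coefficients lie in the subring generated
by the (Diophantine) constants.  Then Hilbert's tenth problem over `R[α]`, in the language
augmented by a constant for `α` and a unary predicate for membership in `R`, also has a
positive answer. -/
theorem stmt17 {A : Type*} [CommRing A] [IsDomain A]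
    (γ : Type) (rels : ℕ → Type) [Encodable γ] [∀ n, Encodable (rels n)]
    (R : Subring A) (cI : γ → R) (relI : ∀ n, rels n → (Fin n → R) → Prop)
    (α : A) (P : Polynomial A) (hPmonic : P.Monic) (hPα : P.eval α = 0)
    (hPcoeff : ∀ i, P.coeff i ∈ Subring.closure (Set.range fun g => (cI g : A)))
    (hdec : HTPPos (↥R) cI relI) :
    HTPPos (↥(Subring.closure ((R : Set A) ∪ {α}))) (cIA R α cI) (relIA R α relI) := by
  let R₀ := Subring.closure (Set.range cI)
  let Ω := AlgebraicClosure (FractionRing A)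
  have : FaithfulSMul A Ω := .trans A (FractionRing A) Ω
  obtain ⟨β, hβ⟩ := exists_map_eq_prod_X_sub_C Ω hPmonic
  have hroot : (P.map (algebraMap A Ω)).eval (algebraMap A Ω α) = 0 := by
    rw [Polynomial.eval_map_apply, hPα, map_zero]
  rw [hβ, Polynomial.eval_prod, Finset.prod_eq_zero_iff] at hroot
  obtain ⟨i₀, -, hi₀⟩ := hroot
  rw [Polynomial.eval_sub, Polynomial.eval_X, Polynomial.eval_C, sub_eq_zero] at hi₀
  obtain ⟨p, hmonic, rfl⟩ := exists_monic_lift hPmonic hPcoeff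
  refine HTPPos.adjoin hmonic ?_ hi₀.symm (fun z hz => ?_) hdec
  · rwa [Polynomial.map_map] at hβ
  · refine exists_sum_mul_pow_eq_of_mem_closure (hmonic.map (algebraMap R₀ R)) ?_ ?_ hz
    · rwa [← Polynomial.eval_map_algebraMap, Polynomial.map_map]
    · rw [hmonic.natDegree_map, hmonic.natDegree_map]
end
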